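/- arXiv:math/0702117 — 5 statements merged into one kernel-verified Lean document; each statement's English description precedes it below -/
import Mathlib

section
/- Let G be a hyperbolic group, let h ∈ G be an element of infinite order, and suppose there exist a ∈ G and integers p, q such that h^q = a h^p a^{-1} in G. Then p = q or p = -q. -/
/-- The word metric on a group `G` with respect to a generating set `S`:
`wordDist S g h` is the least length of a word in `S ∪ S⁻¹` representing `g⁻¹ * h`. -/
noncomputable def wordDist {G : Type*} [Group G] (S : Set G) (g h : G) : ℝ :=
  sInf {r : ℝ | ∃ l : List G, (∀ x ∈ l, x ∈ S ∨ x⁻¹ ∈ S) ∧ l.prod = g⁻¹ * h ∧ r = l.length}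

/-- The Gromov product `(x|y)_w` with respect to the word metric for `S`. -/
noncomputable def gromovProd {G : Type*} [Group G] (S : Set G) (w x y : G) : ℝ :=
  (wordDist S x w + wordDist S y w - wordDist S x y) / 2

/-- A group is (Gromov) hyperbolic if it admits a finite generating set `S` such that
the word metric `d_S` satisfies the Gromov product four-point condition for some `δ ≥ 0`. -/
def IsHyperbolicGroup (G : Type*) [Group G] : Prop :=
  ∃ S : Set G, S.Finite ∧ Subgroup.closure S = ⊤ ∧
    ∃ δ : ℝ, 0 ≤ δ ∧ ∀ w x y z : G,
      gromovProd S w x y ≥ min (gromovProd S w x z) (gromovProd S w y z) - δ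

theorem wd_le {G : Type*} [Group G] (S : Set G) (x y : G) (l : List G)
    (hl : ∀ z ∈ l, z ∈ S ∨ z⁻¹ ∈ S) (hp : l.prod = x⁻¹ * y) : wordDist S x y ≤ l.length := by
  apply csInf_le
  · exact ⟨0, by rintro r ⟨l, _, _, rfl⟩; positivity⟩
  · exact ⟨l, hl, hp, rfl⟩

theorem wd_word {G : Type*} [Group G] (S : Set G) (hS : Subgroup.closure S = ⊤) (g : G) :
    ∃ l : List G, (∀ z ∈ l, z ∈ S ∨ z⁻¹ ∈ S) ∧ l.prod = g := by
  have hg : g ∈ Subgroup.closure S := by rw [hS]; trivial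
  rw [← Subgroup.mem_toSubmonoid, Subgroup.closure_toSubmonoid] at hg
  obtain ⟨l, h1, h2⟩ := Submonoid.exists_list_of_mem_closure hg
  exact ⟨l, h1, h2⟩

theorem wd_exists {G : Type*} [Group G] (S : Set G) (hS : Subgroup.closure S = ⊤) (x y : G) :
    ∃ l : List G, (∀ z ∈ l, z ∈ S ∨ z⁻¹ ∈ S) ∧ l.prod = x⁻¹ * y ∧ wordDist S x y = l.length := by
  classical
  have hex : ∃ n : ℕ, ∃ l : List G, (∀ z ∈ l, z ∈ S ∨ z⁻¹ ∈ S) ∧ l.prod = x⁻¹ * y ∧ l.length = n := by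
    obtain ⟨l, h1, h2⟩ := wd_word S hS (x⁻¹ * y)
    exact ⟨_, l, h1, h2, rfl⟩
  obtain ⟨l, h1, h2, h3⟩ := Nat.find_spec hex
  refine ⟨l, h1, h2, le_antisymm (wd_le S x y l h1 h2) ?_⟩
  refine le_csInf ⟨(l.length : ℝ), l, h1, h2, rfl⟩ ?_
  rintro r ⟨l', h1', h2', rfl⟩
  rw [h3]
  exact_mod_cast Nat.find_min' hex ⟨l', h1', h2', rfl⟩

theorem wd_tri {G : Type*} [Group G] (S : Set G) (hS : Subgroup.closure S = ⊤) (x y z : G) :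
    wordDist S x z ≤ wordDist S x y + wordDist S y z := by
  obtain ⟨l, h1, h2, h3⟩ := wd_exists S hS x y
  obtain ⟨l', h1', h2', h3'⟩ := wd_exists S hS y z
  rw [h3, h3']
  have := wd_le S x z (l ++ l') (by
    intro w hw
    rcases List.mem_append.1 hw with h | h
    · exact h1 w h
    · exact h1' w h) (by rw [List.prod_append, h2, h2']; group)
  simpa using this

theorem wd_symm_le {G : Type*} [Group G] (S : Set G) (hS : Subgroup.closure S = ⊤) (x y : G) :
    wordDist S y x ≤ wordDist S x y := by
  obtain ⟨l, h1, h2, h3⟩ := wd_exists S hS x y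
  rw [h3]
  have := wd_le S y x (l.map (fun x => x⁻¹)).reverse (by
    intro w hw
    simp only [List.mem_reverse, List.mem_map] at hw
    obtain ⟨v, hv, rfl⟩ := hw
    rw [inv_inv]
    exact (h1 v hv).symm) (by rw [← List.prod_inv_reverse, h2]; group)
  simpa using this

theorem wd_inv {G : Type*} [Group G] (S : Set G) (g x y : G) :
    wordDist S (g * x) (g * y) = wordDist S x y := by
  unfold wordDist
  rw [show (g * x)⁻¹ * (g * y) = x⁻¹ * y by group]

theorem wd_finite {G : Type*} [Group G] (S : Set G) (hfin : S.Finite)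
    (hS : Subgroup.closure S = ⊤) (K : ℝ) : {g : G | wordDist S 1 g ≤ K}.Finite := by
  have hT : (S ∪ S⁻¹).Finite := hfin.union hfin.inv
  have := hT.to_subtype
  have hA := (List.finite_length_le (S ∪ S⁻¹ : Set G) ⌊K⌋₊).image
    (fun l => (l.map Subtype.val).prod)
  refine hA.subset ?_
  intro g hg
  obtain ⟨l, h1, h2, h3⟩ := wd_exists S hS 1 g
  have hg' : (l.length : ℝ) ≤ K := by rw [← h3]; exact hg
  refine ⟨l.attach.map (fun z => ⟨z.1, h1 z.1 z.2⟩), ?_, ?_⟩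
  · show List.length _ ≤ _
    simpa using Nat.le_floor hg'
  · simp only [List.map_map]
    have : l.attach.map (Subtype.val ∘ fun z : {z // z ∈ l} =>
        (⟨z.1, h1 z.1 z.2⟩ : (S ∪ S⁻¹ : Set G))) = l := by
      exact List.attach_map_subtype_val l
    rw [this, h2]; group

theorem wd_prefix {G : Type*} [Group G] (S : Set G)
    (hS : Subgroup.closure S = ⊤) (g : G) :
    ∃ m : G, wordDist S 1 g ≤ 2 * wordDist S 1 m + 1 ∧ 2 * wordDist S 1 m ≤ wordDist S 1 g ∧
      wordDist S 1 m + wordDist S m g = wordDist S 1 g := by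
  obtain ⟨l, h1, h2, h3⟩ := wd_exists S hS 1 g
  have hp : (l.take (l.length / 2)).prod * (l.drop (l.length / 2)).prod = g := by
    rw [← List.prod_append, List.take_append_drop, h2]; group
  set k := l.length / 2 with hk
  have a1 := wd_le S 1 (l.take k).prod (l.take k) (fun z hz => h1 z (List.mem_of_mem_take hz))
    (by group)
  have a2 := wd_le S (l.take k).prod g (l.drop k) (fun z hz => h1 z (List.mem_of_mem_drop hz))
    (by rw [← hp]; group)
  have a3 := wd_tri S hS 1 (l.take k).prod g
  have b1 : (l.take k).length = k := by rw [List.length_take]; omega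
  have b2 : ((l.drop k).length : ℝ) = l.length - k := by
    rw [List.length_drop]; push_cast [show k ≤ l.length by omega]; ring
  rw [b1] at a1
  rw [b2] at a2
  have c1 : (l.length : ℝ) ≤ 2 * k + 1 := by exact_mod_cast (by omega)
  have c2 : (2 * k : ℝ) ≤ l.length := by exact_mod_cast (by omega)
  refine ⟨(l.take k).prod, ?_, ?_, ?_⟩ <;> linarith

/-- the word metric facts that matter -/
structure HypMet {G : Type*} [Group G] (d : G → G → ℝ) (δ : ℝ) : Prop where
  tri : ∀ x y z, d x z ≤ d x y + d y z
  symm : ∀ x y, d x y = d y x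
  nonneg : ∀ x y, 0 ≤ d x y
  inv : ∀ g x y, d (g * x) (g * y) = d x y
  fin : ∀ K, {g : G | d 1 g ≤ K}.Finite
  mid : ∀ g : G, ∃ m : G, d 1 g ≤ 2 * d 1 m + 1 ∧ 2 * d 1 m ≤ d 1 g ∧ d 1 m + d m g = d 1 g
  four : ∀ x y z w, d x y + d z w ≤ max (d x z + d y w) (d x w + d y z) + 2 * δ
  dpos : 0 ≤ δ

theorem hypMet_of {G : Type*} [Group G] (hG : IsHyperbolicGroup G) :
    ∃ (d : G → G → ℝ) (δ : ℝ), HypMet d δ := by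
  obtain ⟨S, hfin, hS, δ, hδ, H⟩ := hG
  have sy : ∀ x y, wordDist S x y = wordDist S y x :=
    fun x y => le_antisymm (wd_symm_le S hS y x) (wd_symm_le S hS x y)
  refine ⟨wordDist S, δ, wd_tri S hS, sy, ?_, wd_inv S, wd_finite S hfin hS, wd_prefix S hS, ?_, hδ⟩
  · intro x y
    obtain ⟨l, h1, h2, h3⟩ := wd_exists S hS x y
    rw [h3]; positivity
  · intro x y z w
    have := H w x y z
    unfold gromovProd at this
    rw [sy y z, sy z w]
    rw [sy z w] at this
    rcases min_le_iff.1 (sub_le_iff_le_add.1 this) with h | h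
    · have := le_max_right (wordDist S x z + wordDist S y w) (wordDist S x w + wordDist S z y)
      have := le_max_left (wordDist S x z + wordDist S y w) (wordDist S x w + wordDist S z y)
      linarith [sy y z]
    · have := le_max_right (wordDist S x z + wordDist S y w) (wordDist S x w + wordDist S z y)
      have := le_max_left (wordDist S x z + wordDist S y w) (wordDist S x w + wordDist S z y)
      linarith [sy y z]

/-- linear growth -/
theorem HypMet.growth {G : Type*} [Group G] {d : G → G → ℝ} {δ : ℝ} (H : HypMet d δ) (g x : G)
    (h2 : d x (g * x) + 2 * δ + 1 ≤ d x (g ^ 2 * x)) (n : ℕ) :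
    (n : ℝ) ≤ d x (g ^ (n + 1) * x) := by
  have key : ∀ n : ℕ, d x (g ^ (n + 1) * x) + 1 ≤ d x (g ^ (n + 2) * x) := by
    intro n
    induction n with
    | zero => simp only [zero_add, pow_one]; linarith [H.dpos]
    | succ n ih =>
      have h4 := H.four x (g ^ 2 * x) (g * x) (g ^ (n + 3) * x)
      have e1 : d (g * x) (g ^ (n + 3) * x) = d x (g ^ (n + 2) * x) := by
        rw [show g ^ (n + 3) * x = g * (g ^ (n + 2) * x) by rw [pow_succ' g (n+2)]; group, H.inv]
      have e2 : d (g ^ 2 * x) (g ^ (n + 3) * x) = d x (g ^ (n + 1) * x) := by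
        rw [show g ^ (n + 3) * x = g ^ 2 * (g ^ (n + 1) * x) by
          rw [← mul_assoc, ← pow_add]; congr 2; omega, H.inv]
      have e3 : d (g ^ 2 * x) (g * x) = d x (g * x) := by
        rw [H.symm, show g ^ 2 * x = g * (g * x) by rw [pow_two]; group, H.inv]
      rw [e1, e2, e3] at h4
      have e4 : n + 1 + 2 = n + 3 := by omega
      have e5 : n + 1 + 1 = n + 2 := by omega
      rw [e4, e5]
      rcases le_max_iff.1 (sub_le_iff_le_add.2 h4) with h | h <;> linarith
  induction n with
  | zero => simpa using H.nonneg _ _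
  | succ n ih => have := key n; push_cast; linarith

/-- geometric core -/
theorem HypMet.core {G : Type*} [Group G] {d : G → G → ℝ} {δ : ℝ} (H : HypMet d δ)
    (f g m : G) (hc : f * g = g * f) (L : ℝ) (hL : d 1 f ≤ L)
    (hD : 10 * L + 10 * δ + 10 ≤ d 1 g)
    (m1 : d 1 g ≤ 2 * d 1 m + 1) (m2 : 2 * d 1 m ≤ d 1 g) (m3 : d 1 m + d m g = d 1 g) :
    d 1 (f * m) ≤ d 1 m + d 1 g - d f g + 2 * δ ∧ d (f * m) g ≤ d f g - d 1 m + 2 * δ := by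
  have a1 : d f (f * m) = d 1 m := by simpa using H.inv f 1 m
  have a2 : d f (f * g) = d 1 g := by simpa using H.inv f 1 g
  have a3 : d (f * m) (f * g) = d m g := H.inv f m g
  have a4 : d g (f * g) = d 1 f := by rw [hc]; simpa using H.inv g 1 f
  have t1 := H.tri 1 (f * m) f
  have t2 := H.tri 1 f g
  have t3 := H.tri f 1 (f * m)
  have t4 := H.tri (f * m) g (f * g)
  have t5 := H.tri (f * m) (f * g) g
  have s1 := H.symm (f * m) f
  have s2 := H.symm f 1
  have s3 := H.symm (f * g) g
  have s4 := H.symm f g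
  have s5 := H.symm 1 (f * m)
  have s6 := H.symm g (f * m)
  have hd := H.dpos
  have h0 := H.nonneg 1 f
  constructor
  · have h4 := H.four (f * m) 1 f g
    rcases le_max_iff.1 (sub_le_iff_le_add.2 h4) with h | h <;> linarith
  · have h4 := H.four (f * m) g f (f * g)
    rcases le_max_iff.1 (sub_le_iff_le_add.2 h4) with h | h <;>
      linarith

theorem HypMet.small {G : Type*} [Group G] {d : G → G → ℝ} {δ : ℝ} (H : HypMet d δ)
    (f g m : G) (hc : f * g = g * f) (L : ℝ) (hL : d 1 f ≤ L)
    (hD : 10 * L + 10 * δ + 10 ≤ d 1 g)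
    (m1 : d 1 g ≤ 2 * d 1 m + 1) (m2 : 2 * d 1 m ≤ d 1 g) (m3 : d 1 m + d m g = d 1 g)
    (hf : d m (f ^ 2 * m) ≤ d m (f * m) + 2 * δ + 1) :
    d m (f * m) ≤ 24 * δ + 1 := by
  have hc' : f⁻¹ * g = g * f⁻¹ := by
    rw [inv_mul_eq_iff_eq_mul, ← mul_assoc, hc]; group
  have hi : d 1 f⁻¹ = d 1 f := by rw [H.symm 1 f]; simpa using (H.inv f 1 f⁻¹).symm
  obtain ⟨p1, p2⟩ := H.core f g m hc L hL hD m1 m2 m3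
  obtain ⟨n1, n2⟩ := H.core f⁻¹ g m hc' L (by rw [hi]; exact hL) hD m1 m2 m3
  have e1 : d f⁻¹ g = d 1 (f * g) := by simpa using (H.inv f f⁻¹ g).symm
  have e2 : d (f⁻¹ * m) (f * m) = d m (f ^ 2 * m) := by
    have := (H.inv f (f⁻¹ * m) (f * m)).symm
    rw [this, pow_two]; congr 1 <;> group
  have a2 : d f (f * g) = d 1 g := by simpa using H.inv f 1 g
  have a4 : d g (f * g) = d 1 f := by rw [hc]; simpa using H.inv g 1 f
  have t1 := H.tri 1 (f * m) g
  have t2 := H.tri 1 (f⁻¹ * m) g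
  have t3 := H.tri 1 (f * m) (f⁻¹ * m)
  have t4 := H.tri 1 (f⁻¹ * m) (f * m)
  have s1 := H.symm (f * m) (f⁻¹ * m)
  have s2 := H.symm f g
  have s3 := H.symm m 1
  have s4 := H.symm (f * m) 1
  have hd := H.dpos
  have h0 := H.nonneg 1 f
  have q1 := H.four f g 1 (f * g)
  have q2 := H.four 1 g f (f * g)
  have q3 := H.four m (f * m) 1 g
  have s5 := H.symm f 1
  have s6 := H.symm g 1
  have r1 : d f g + d 1 (f * g) ≤ 2 * d 1 g + 2 * δ := by
    rcases le_max_iff.1 (sub_le_iff_le_add.2 q1) with h | h <;> linarith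
  have r2 : 2 * d 1 g ≤ d f g + d 1 (f * g) + 2 * δ := by
    rcases le_max_iff.1 (sub_le_iff_le_add.2 q2) with h | h <;> linarith
  rcases le_max_iff.1 (sub_le_iff_le_add.2 q3) with h | h <;> linarith

theorem HypMet.false_of {G : Type*} [Group G] {d : G → G → ℝ} {δ : ℝ} (H : HypMet d δ)
    (h : G) (hord : ∀ n : ℤ, n ≠ 0 → h ^ n ≠ 1)
    (hlin : ∀ (i : ℕ) (x : G), 0 < i → d x ((h ^ i) ^ 2 * x) ≤ d x (h ^ i * x) + 2 * δ + 1) :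
    False := by
  classical
  have hinj : Function.Injective (fun n : ℕ => h ^ n) := by
    intro i j hij
    by_contra hne
    apply hord ((i : ℤ) - j) (by omega)
    rw [zpow_sub, zpow_natCast, zpow_natCast]
    simp only at hij
    rw [hij]; group
  have hB := H.fin (24 * δ + 1)
  set B := hB.toFinset with hBdef
  set N := B.card + 1 with hN
  obtain ⟨L, hL⟩ : ∃ L : ℝ, ∀ i ∈ Finset.Icc 1 N, d 1 (h ^ i) ≤ L := by
    refine ⟨∑ i ∈ Finset.Icc 1 N, d 1 (h ^ i), fun i hi => ?_⟩
    exact Finset.single_le_sum (f := fun i => d 1 (h ^ i)) (fun i _ => H.nonneg _ _) hi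
  obtain ⟨n, hn⟩ : ∃ n : ℕ, 10 * L + 10 * δ + 10 ≤ d 1 (h ^ n) := by
    by_contra! hcon
    have := (H.fin (10 * L + 10 * δ + 10)).subset
      (show Set.range (fun n : ℕ => h ^ n) ⊆ _ by
        rintro _ ⟨n, rfl⟩; exact (hcon n).le)
    exact Set.infinite_range_of_injective hinj this
  obtain ⟨m, m1, m2, m3⟩ := H.mid (h ^ n)
  have hmaps : ∀ i ∈ Finset.Icc 1 N, m⁻¹ * h ^ i * m ∈ B := by
    intro i hi
    rw [hBdef, Set.Finite.mem_toFinset, Set.mem_ofPred_eq]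
    have := H.small (h ^ i) (h ^ n) m (by rw [← pow_add, ← pow_add, add_comm]) L (hL i hi) hn m1 m2 m3
      (hlin i m (by simp at hi; omega))
    rw [← H.inv m]
    convert this using 2 <;> group
  obtain ⟨i, hi, j, hj, hne, heq⟩ := Finset.exists_ne_map_eq_of_card_lt_of_maps_to
    (s := Finset.Icc 1 N) (t := B) (by simp [hN]) hmaps
  exact hne (hinj (by simpa using heq))

theorem HypMet.sublin {G : Type*} [Group G] {d : G → G → ℝ} {δ : ℝ} (H : HypMet d δ)
    (h a : G) (p q : ℤ) (hp : p ≠ 0) (hq : q ≠ 0) (hne : p.natAbs ≠ q.natAbs)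
    (hconj : h ^ q = a * h ^ p * a⁻¹) :
    Filter.Tendsto (fun n : ℕ => d 1 (h ^ n) / n) Filter.atTop (nhds 0) := by
  have hsub : Subadditive (fun n : ℕ => d 1 (h ^ n)) := by
    intro m n
    have := H.tri 1 (h ^ m) (h ^ (m + n))
    have e : d (h ^ m) (h ^ (m + n)) = d 1 (h ^ n) := by
      rw [pow_add]; simpa using H.inv (h ^ m) 1 (h ^ n)
    simp only; linarith
  have hlim := hsub.tendsto_lim ⟨0, by
    rintro _ ⟨n, rfl⟩; exact div_nonneg (H.nonneg _ _) (by positivity)⟩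
  have hi : ∀ f : G, d 1 f⁻¹ = d 1 f := fun f => by
    rw [H.symm 1 f]; simpa using (H.inv f 1 f⁻¹).symm
  have habs : ∀ z : ℤ, d 1 (h ^ z) = d 1 (h ^ z.natAbs) := by
    intro z
    rcases Int.natAbs_eq z with hz | hz
    · conv_lhs => rw [hz]
      rw [zpow_natCast]
    · conv_lhs => rw [hz]
      rw [zpow_neg, zpow_natCast, hi]
  have hcj : ∀ f : G, d 1 (a * f * a⁻¹) ≤ d 1 f + 2 * d 1 a := by
    intro f
    have t1 := H.tri 1 a (a * f * a⁻¹)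
    have t2 := H.tri a (a * f) (a * f * a⁻¹)
    have e1 : d a (a * f) = d 1 f := by simpa using H.inv a 1 f
    have e2 : d (a * f) (a * f * a⁻¹) = d 1 a⁻¹ := by simpa using H.inv (a * f) 1 a⁻¹
    rw [hi] at e2
    linarith
  have hcj' : ∀ f : G, d 1 f ≤ d 1 (a * f * a⁻¹) + 2 * d 1 a := by
    intro f
    have t1 := H.tri a 1 (a * f)
    have t2 := H.tri 1 (a * f * a⁻¹) (a * f)
    have e1 : d a (a * f) = d 1 f := by simpa using H.inv a 1 f
    have e2 : d (a * f * a⁻¹) (a * f) = d 1 a := by simpa using H.inv (a * f * a⁻¹) 1 a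
    have := H.symm a 1
    linarith
  have hlen : ∀ n : ℕ, |d 1 (h ^ (q.natAbs * n)) - d 1 (h ^ (p.natAbs * n))| ≤ 2 * d 1 a := by
    intro n
    have e : h ^ (q * n) = a * h ^ (p * n) * a⁻¹ := by
      rw [zpow_mul, zpow_mul, hconj, zpow_natCast, zpow_natCast, conj_pow]
    have e1 := habs (q * n)
    have e2 := habs (p * n)
    rw [Int.natAbs_mul, Int.natAbs_natCast] at e1 e2
    rw [← e1, ← e2, e, abs_le]
    constructor <;> linarith [hcj (h ^ (p * n)), hcj' (h ^ (p * n))]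
  have hmulq : ∀ k : ℕ, 0 < k → Filter.Tendsto (fun n : ℕ => d 1 (h ^ (k * n)) / n)
      Filter.atTop (nhds (k * hsub.lim)) := by
    intro k hk
    have t : Filter.Tendsto (fun n : ℕ => k * n) Filter.atTop Filter.atTop :=
      Filter.tendsto_id.const_mul_atTop' hk
    have := (hlim.comp t).const_mul (k : ℝ)
    refine this.congr fun n => ?_
    have hk' : (k : ℝ) ≠ 0 := by positivity
    simp only [Function.comp]
    push_cast
    rcases eq_or_ne (n : ℝ) 0 with h0 | h0
    · simp [h0]
    · field_simp
  have l1 := hmulq q.natAbs (by omega)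
  have l2 := hmulq p.natAbs (by omega)
  have l3 := l1.sub l2
  have l4 : Filter.Tendsto (fun n : ℕ => d 1 (h ^ (q.natAbs * n)) / n - d 1 (h ^ (p.natAbs * n)) / n)
      Filter.atTop (nhds 0) := by
    apply squeeze_zero_norm (a := fun n : ℕ => 2 * d 1 a / (n : ℝ))
    · intro n
      rw [← sub_div, norm_div, Real.norm_eq_abs, Real.norm_natCast]
      exact div_le_div_of_nonneg_right (hlen n) (by positivity)
    · exact tendsto_const_div_atTop_nhds_zero_nat _
  have l5 := tendsto_nhds_unique l3 l4
  rw [← sub_mul] at l5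
  have l6 : hsub.lim = 0 := by
    rcases mul_eq_zero.1 l5 with h | h
    · exact absurd (by exact_mod_cast (sub_eq_zero.1 h).symm) hne
    · exact h
  rwa [l6] at hlim

/-- In a hyperbolic group, if `h` has infinite order and `h^q = a h^p a⁻¹`,
then `p = q` or `p = -q`. -/
theorem stmt_0 {G : Type*} [Group G] (hG : IsHyperbolicGroup G)
    (h : G) (hord : ∀ n : ℤ, n ≠ 0 → h ^ n ≠ 1)
    (a : G) (p q : ℤ) (hconj : h ^ q = a * h ^ p * a⁻¹) :
    p = q ∨ p = -q := by
  obtain ⟨d, δ, H⟩ := hypMet_of hG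
  by_cases hp : p = 0
  · left
    subst hp
    by_contra hq
    exact hord q (fun h => hq h.symm) (by simpa using hconj)
  by_cases hq : q = 0
  · exfalso
    subst hq
    apply hord p hp
    rw [zpow_zero] at hconj
    have : h ^ p = a⁻¹ * (a * h ^ p * a⁻¹) * a := by group
    rw [this, ← hconj]; group
  by_contra hcon
  have hne : p.natAbs ≠ q.natAbs := by omega
  have hs := H.sublin h a p q hp hq hne hconj
  refine H.false_of h hord fun i x hi => ?_
  by_contra! hgt
  have gr := H.growth (h ^ i) x hgt.le
  have t : Filter.Tendsto (fun n : ℕ => i * (n + 1)) Filter.atTop Filter.atTop :=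
    (Filter.tendsto_add_atTop_nat 1).const_mul_atTop' hi
  have hs2 := hs.comp t
  have hi0 : (0 : ℝ) < i := by exact_mod_cast hi
  have hev := hs2.eventually (gt_mem_nhds (show (0 : ℝ) < 1 / (2 * i) by positivity))
  obtain ⟨M, hM⟩ := exists_nat_gt (4 * d 1 x + 4)
  obtain ⟨n, hn1, hn2⟩ := (hev.and (Filter.eventually_ge_atTop M)).exists
  have g1 := gr n
  rw [← pow_mul] at g1
  simp only [Function.comp] at hn1
  push_cast at hn1
  rw [div_lt_div_iff₀ (by positivity) (by positivity)] at hn1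
  have hn3 : d 1 (h ^ (i * (n + 1))) * 2 < (n + 1) := by
    by_contra! hc
    have := mul_le_mul_of_nonneg_left hc hi0.le
    linarith
  have t1 := H.tri x 1 (h ^ (i * (n + 1)) * x)
  have t2 := H.tri 1 (h ^ (i * (n + 1))) (h ^ (i * (n + 1)) * x)
  have e2 : d (h ^ (i * (n + 1))) (h ^ (i * (n + 1)) * x) = d 1 x := by
    simpa using H.inv (h ^ (i * (n + 1))) 1 x
  have s := H.symm x 1
  have hMn : (M : ℝ) ≤ n := by exact_mod_cast hn2
  linarith
end

section
/- Let G be a hyperbolic group, let h ∈ G be an element of infinite order, and suppose there exist a ∈ G and integers p ≠ 0 and q such that h^q = a h^p a^{-1} in G. Then there exist a nonzero integer r and an integer s such that a^r = h^s; in particular the cyclic subgroup ⟨a⟩ is a finite extension of a subgroup of ⟨h⟩ (the subgroup ⟨a^r⟩ ≤ ⟨h⟩ has finite index in ⟨a⟩). -/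
structure HypLen {G : Type*} [Group G] (l : G → ℝ) (δ : ℝ) : Prop where
  one : l 1 = 0
  inv : ∀ g, l g⁻¹ = l g
  mul : ∀ g k, l (g * k) ≤ l g + l k
  hyp : ∀ x y z w, l (x⁻¹ * y) + l (z⁻¹ * w) ≤
    max (l (x⁻¹ * z) + l (y⁻¹ * w)) (l (y⁻¹ * z) + l (x⁻¹ * w)) + 2 * δ
  geod : ∀ v, ∀ k : ℕ, (k : ℝ) ≤ l v → ∃ x, l x = k ∧ l (x⁻¹ * v) = l v - k
  fin : ∀ K : ℝ, {g | l g ≤ K}.Finite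

namespace HypLen

variable {G : Type*} [Group G] {l : G → ℝ} {δ : ℝ}

lemma nonneg (H : HypLen l δ) (g : G) : 0 ≤ l g := by
  have := H.mul g g⁻¹
  rw [mul_inv_cancel, H.one, H.inv] at this
  linarith

lemma symm (H : HypLen l δ) (x y : G) : l (x⁻¹ * y) = l (y⁻¹ * x) := by
  rw [← H.inv]; congr 1; group

lemma tri (H : HypLen l δ) (x y z : G) : l (x⁻¹ * z) ≤ l (x⁻¹ * y) + l (y⁻¹ * z) := by
  have := H.mul (x⁻¹ * y) (y⁻¹ * z)
  rwa [show x⁻¹ * y * (y⁻¹ * z) = x⁻¹ * z by group] at this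

lemma trans (_ : HypLen l δ) (f x y : G) : l ((f * x)⁻¹ * (f * y)) = l (x⁻¹ * y) := by
  congr 1; group

lemma pow_le (H : HypLen l δ) (g : G) (n : ℕ) : l (g ^ n) ≤ n * l g := by
  induction n with
  | zero => simp [H.one]
  | succ n ih =>
    rw [pow_succ]
    have := H.mul (g ^ n) g
    push_cast
    linarith

/-- key shift lemma -/
lemma shift (H : HypLen l δ) (f x v : G) (D : ℝ)
    (hD : l (v⁻¹ * (f * v)) ≤ D) (hρ : 2 * D + 2 * δ < l (x⁻¹ * v))
    (hs : l (x⁻¹ * (f * x)) ≤ l ((f * x)⁻¹ * v) - l (x⁻¹ * v) + 2 * δ) :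
    2 * l (x⁻¹ * (f * x)) - 6 * δ ≤ l (x⁻¹ * (f * (f * x))) := by
  have t1 := H.hyp (f * (f * x)) (f * v) (f * x) v
  have e1 : l ((f * (f * x))⁻¹ * (f * v)) = l ((f * x)⁻¹ * v) := H.trans _ _ _
  have e2 : l ((f * (f * x))⁻¹ * (f * x)) = l (x⁻¹ * (f * x)) := by
    rw [H.trans, H.symm]
  have e3 : l ((f * v)⁻¹ * v) = l (v⁻¹ * (f * v)) := H.symm _ _
  have e4 : l ((f * v)⁻¹ * (f * x)) = l (x⁻¹ * v) := by rw [H.trans, H.symm]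
  rw [e1, e2, e3, e4] at t1
  have t2 := H.tri (f * x) (f * v) v
  rw [H.trans, e3] at t2
  have t3 := H.tri (f * x) v (f * v)
  rw [H.trans] at t3
  have t4 := H.tri (f * (f * x)) x v
  rw [H.symm (f * (f * x)) x] at t4
  rcases le_total (l (x⁻¹ * (f * x)) + l (v⁻¹ * (f * v)))
    (l (x⁻¹ * v) + l ((f * (f * x))⁻¹ * v)) with hm | hm
  · rw [max_eq_right hm] at t1
    linarith
  · rw [max_eq_left hm] at t1
    have t5 := H.nonneg (v⁻¹ * (f * v))
    have t6 := H.nonneg (x⁻¹ * (f * x))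
    linarith

lemma exists_loxo (H : HypLen l δ) (hδ : 1 ≤ δ) (h : G)
    (hord : ∀ n : ℤ, n ≠ 0 → h ^ n ≠ 1) :
    ∃ (n : ℕ) (x : G), 0 < n ∧
      l (x⁻¹ * h ^ n * x) + 4 * δ ≤ l ((x⁻¹ * h ^ n * x) ^ 2) := by
  by_contra! hcon
  have hinj : Function.Injective (fun n : ℕ => h ^ n) := by
    rw [injective_pow_iff_not_isOfFinOrder]
    rw [isOfFinOrder_iff_pow_eq_one]
    rintro ⟨n, hn, h1⟩
    exact hord n (by exact_mod_cast hn.ne') (by exact_mod_cast h1)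
  set K : ℝ := 10 * δ
  have hfin := H.fin K
  set N := hfin.toFinset.card
  set D : ℝ := N * l h with hDdef
  have hD0 : 0 ≤ D := mul_nonneg (Nat.cast_nonneg _) (H.nonneg _)
  obtain ⟨T, hT⟩ := exists_nat_gt (2 * D + 2 * δ)
  obtain ⟨M, hM⟩ : ∃ M : ℕ, 2 * (T : ℝ) < l (h ^ M) := by
    by_contra! hc
    exact Set.infinite_of_injective_forall_mem hinj (s := {g | l g ≤ 2 * T}) hc (H.fin _)
  obtain ⟨x, hx1, hx2⟩ := H.geod (h ^ M) T (by have : (0:ℝ) ≤ T := T.cast_nonneg; linarith)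
  have key : ∀ n ∈ Finset.range (N + 1), x⁻¹ * h ^ n * x ∈ hfin.toFinset := by
    intro n hn
    rw [Finset.mem_range] at hn
    simp only [Set.Finite.mem_toFinset, Set.mem_ofPred_eq]
    rcases Nat.eq_zero_or_pos n with rfl | hpos
    · simp only [pow_zero, mul_one, inv_mul_cancel, H.one]; positivity
    have hc := hcon n x hpos
    have hnD : l (h ^ n) ≤ D := by
      refine (H.pow_le h n).trans ?_
      have : (n : ℝ) ≤ N := by exact_mod_cast Nat.lt_succ_iff.mp hn
      exact mul_le_mul_of_nonneg_right this (H.nonneg _)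
    have e1 : x⁻¹ * h ^ n * x = x⁻¹ * (h ^ n * x) := by group
    have e2 : (x⁻¹ * h ^ n * x) ^ 2 = x⁻¹ * (h ^ n * (h ^ n * x)) := by
      rw [pow_two]; group
    rw [e2] at hc
    rw [e1] at hc ⊢
    have t := H.hyp x (h ^ n * x) 1 (h ^ M)
    simp only [inv_one, one_mul, mul_one] at t
    have ex : l x⁻¹ = l x := H.inv x
    have t1 := H.shift (h ^ n) x 1 D (by simpa using hnD) (by simp only [mul_one]; linarith)
    have t2 := H.shift (h ^ n) x (h ^ M) D
      (by rw [← pow_add, add_comm, pow_add, inv_mul_cancel_left]; exact hnD) (by linarith)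
    simp only [mul_one] at t1
    rcases le_total (l x⁻¹ + l ((h ^ n * x)⁻¹ * h ^ M))
      (l (h ^ n * x)⁻¹ + l (x⁻¹ * h ^ M)) with hm | hm
    · rw [max_eq_right hm] at t
      have := t1 (by linarith)
      simp only [K]; linarith
    · rw [max_eq_left hm] at t
      have := t2 (by linarith)
      simp only [K]; linarith
  have := Finset.card_le_card_of_injOn (fun n => x⁻¹ * h ^ n * x) key (by
    intro i _ j _ hij
    apply hinj
    simpa using hij)
  simp only [Finset.card_range] at this
  omega

lemma incr (H : HypLen l δ) (hδ : 1 ≤ δ) (g : G) (hg : l g + 4 * δ ≤ l (g ^ 2)) (n : ℕ) :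
    l (g ^ n) + 2 * δ ≤ l (g ^ (n + 1)) := by
  induction n with
  | zero =>
    have := H.pow_le g 2
    push_cast at this
    simp only [pow_zero, H.one, zero_add, pow_one]
    linarith
  | succ n ih =>
    have t := H.hyp 1 (g ^ (n + 1)) (g ^ n) (g ^ (n + 2))
    have e1 : (g ^ n)⁻¹ * g ^ (n + 2) = g ^ 2 := by rw [pow_add]; group
    have e2 : (g ^ (n + 1))⁻¹ * g ^ (n + 2) = g := by
      rw [show n + 2 = n + 1 + 1 by ring, pow_succ g (n + 1)]; group
    have e3 : l ((g ^ (n + 1))⁻¹ * g ^ n) = l g := by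
      rw [H.symm]; rw [pow_succ]; congr 1; group
    simp only [inv_one, one_mul] at t
    rw [e1, e2, e3] at t
    rcases max_choice (l (g ^ n) + l g) (l g + l (g ^ (n + 2))) with hm | hm
    · rw [hm] at t; linarith
    · rw [hm] at t
      show _ ≤ l (g ^ (n + 2))
      linarith

lemma incr' (H : HypLen l δ) (hδ : 1 ≤ δ) (g : G) (hg : l g + 4 * δ ≤ l (g ^ 2)) (n m : ℕ) :
    l (g ^ n) + m ≤ l (g ^ (n + m)) := by
  induction m with
  | zero => simp
  | succ m ih =>
    have := H.incr hδ g hg (n + m)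
    rw [← add_assoc]
    push_cast
    linarith

lemma quasi (H : HypLen l δ) (hδ : 1 ≤ δ) (g : G) (hg : l g + 4 * δ ≤ l (g ^ 2)) (i j : ℕ) :
    l (g ^ i) + l (g ^ j) ≤ l (g ^ (i + j)) + (l g + 2 * δ) := by
  have h0 := H.nonneg g
  rcases j with _ | j
  · simp only [pow_zero, H.one, add_zero]; linarith
  have t := H.hyp 1 (g ^ (i + 1)) (g ^ i) (g ^ (i + (j + 1)))
  have e1 : (g ^ i)⁻¹ * g ^ (i + (j + 1)) = g ^ (j + 1) := by rw [pow_add g i]; group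
  have e2 : (g ^ (i + 1))⁻¹ * g ^ (i + (j + 1)) = g ^ j := by
    rw [show i + (j + 1) = i + 1 + j by ring, pow_add g (i + 1)]; group
  have e3 : l ((g ^ (i + 1))⁻¹ * g ^ i) = l g := by
    rw [H.symm]; rw [pow_succ]; congr 1; group
  simp only [inv_one, one_mul] at t
  rw [e1, e2, e3] at t
  have i1 := H.incr hδ g hg i
  have i2 := H.incr hδ g hg j
  rcases max_choice (l (g ^ i) + l (g ^ j)) (l g + l (g ^ (i + (j + 1)))) with hm | hm
  · rw [hm] at t; linarith
  · rw [hm] at t; linarith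

/-- elements commuting with `f` are uniformly close to powers of `f` -/
lemma near (H : HypLen l δ) (hδ : 1 ≤ δ) (f : G) (E : ℝ)
    (hE : ∀ i j : ℕ, l (f ^ i) + l (f ^ j) ≤ l (f ^ (i + j)) + E)
    (hgrow : ∀ n : ℕ, (n : ℝ) ≤ l (f ^ n)) (y : G) (hy : Commute y f) :
    ∃ i : ℤ, l (y⁻¹ * f ^ i) ≤ 2 * E + 6 * δ + l f := by
  have hE0 : 0 ≤ E := by simpa [H.one] using hE 0 0
  obtain ⟨N, hN⟩ := exists_nat_gt (l y + E + 6 * δ)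
  have hNl := hgrow N
  set X : ℕ → G := fun i => f ^ ((i : ℤ) - N) with hX
  set Gp : G → G → ℝ := fun a b => l (a⁻¹ * y) + l (b⁻¹ * y) - l (a⁻¹ * b) with hGp
  have hmin : ∀ a b c, Gp a c ≤ Gp a b + 2 * δ ∨ Gp c b ≤ Gp a b + 2 * δ := by
    intro a b c
    have t := H.hyp a b c y
    simp only [hGp]
    rw [H.symm c b]
    rcases max_choice (l (a⁻¹ * c) + l (b⁻¹ * y)) (l (b⁻¹ * c) + l (a⁻¹ * y)) with hm | hm
    · left; rw [hm] at t; linarith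
    · right; rw [hm] at t; linarith
  have hdist : ∀ i j : ℕ, l ((X i)⁻¹ * X (i + j)) = l (f ^ j) := by
    intro i j
    congr 1
    simp only [hX]
    rw [← zpow_neg, ← zpow_add, ← zpow_natCast]
    congr 1
    push_cast; ring
  have hX0 : l (X 0) = l (f ^ N) := by
    have := hdist 0 N
    have e : X (0 + N) = 1 := by simp [hX]
    rw [e, mul_one, H.inv] at this
    exact this
  have hX2 : l (X (2 * N)) = l (f ^ N) := by
    simp only [hX]
    rw [← zpow_natCast]; congr 2; push_cast; ring
  have hcomm : ∀ i, X i * y = y * X i := fun i => ((hy.zpow_right _).eq).symm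
  have hclose : ∀ i, l ((X i)⁻¹ * (y * X i)) = l y := by
    intro i; rw [← hcomm, inv_mul_cancel_left]
  have hback : ∀ i, l ((y * X i)⁻¹ * y) = l (X i) := by
    intro i; rw [H.symm, inv_mul_cancel_left]
  have hfar : ∀ i, l (X i) ≤ l ((X i)⁻¹ * y) + l y := by
    intro i
    have := H.tri (y * X i) (X i) y
    rw [hback, H.symm (y * X i), hclose] at this
    linarith
  have e02 : l ((X 0)⁻¹ * X (2 * N)) = l (f ^ (2 * N)) := by
    have := hdist 0 (2 * N); rwa [zero_add] at this
  have hEN := hE N N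
  rw [← two_mul N] at hEN
  -- product at y
  have g0 : Gp (y * X 0) (y * X (2 * N)) ≤ E := by
    simp only [hGp]
    rw [hback, hback, H.trans, hX0, hX2, e02]
    linarith
  have f0 := hfar 0
  have f2 := hfar (2 * N)
  rw [hX0] at f0
  rw [hX2] at f2
  have g1 : Gp (X 0) (y * X (2 * N)) ≤ E + 2 * δ := by
    rcases hmin (y * X 0) (y * X (2 * N)) (X 0) with h1 | h1
    · have : Gp (y * X 0) (X 0) = l (f ^ N) + l ((X 0)⁻¹ * y) - l y := by
        simp only [hGp]; rw [hback, H.symm (y * X 0) (X 0), hclose, hX0]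
      linarith
    · linarith
  have g2 : Gp (X 0) (X (2 * N)) ≤ E + 4 * δ := by
    rcases hmin (X 0) (y * X (2 * N)) (X (2 * N)) with h1 | h1
    · linarith
    · have : Gp (X (2 * N)) (y * X (2 * N)) = l ((X (2 * N))⁻¹ * y) + l (f ^ N) - l y := by
        simp only [hGp]; rw [hback, hclose, hX2]
      linarith
  classical
  have hex : ∃ i, Gp (X 0) (X i) ≤ E + 6 * δ := ⟨2 * N, by linarith⟩
  have hi := Nat.find_spec hex
  have hle : Nat.find hex ≤ 2 * N := Nat.find_min' hex (by linarith)
  have hlt : ∀ m, m < Nat.find hex → ¬ (Gp (X 0) (X m) ≤ E + 6 * δ) := fun m => Nat.find_min hex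
  generalize Nat.find hex = i at hi hle hlt
  rcases i with _ | i
  · exfalso
    have : Gp (X 0) (X 0) = 2 * l ((X 0)⁻¹ * y) := by
      simp only [hGp, inv_mul_cancel, H.one]; ring
    linarith
  have hi' := hlt i (Nat.lt_succ_self i)
  have hs : Gp (X i) (X (2 * N)) ≤ E + 6 * δ := by
    rcases hmin (X 0) (X (2 * N)) (X i) with h1 | h1 <;> linarith
  obtain ⟨k, hk⟩ := Nat.exists_eq_add_of_le hle
  have d1 := hdist i 1
  rw [pow_one] at d1
  have d2 := hdist 0 (i + 1)
  rw [zero_add] at d2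
  have d3 := hdist (i + 1) k
  rw [← hk] at d3
  have hq := hE (i + 1) k
  rw [← hk] at hq
  have s1 := H.tri (X (i + 1)) (X i) y
  have s2 := H.tri (X i) (X (i + 1)) (X (2 * N))
  rw [H.symm (X (i + 1)) (X i), d1] at s1
  rw [d1] at s2
  have s3 := H.tri (X 0) y (X (2 * N))
  rw [H.symm y] at s3
  refine ⟨((i + 1 : ℕ) : ℤ) - N, ?_⟩
  show l (y⁻¹ * X (i + 1)) ≤ _
  rw [H.symm]
  simp only [hGp] at hi hs
  have s4 := H.tri (X i) (X (i + 1)) y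
  have s5 := H.tri (X (i + 1)) (X i) (X (2 * N))
  rw [H.symm (X (i + 1)) (X i), d1] at s5
  linarith

lemma commute_pow (H : HypLen l δ) (hδ : 1 ≤ δ) (f : G) (E : ℝ)
    (hE : ∀ i j : ℕ, l (f ^ i) + l (f ^ j) ≤ l (f ^ (i + j)) + E)
    (hgrow : ∀ n : ℕ, (n : ℝ) ≤ l (f ^ n)) (b : G) (hb : Commute b f) :
    ∃ r s : ℤ, r ≠ 0 ∧ b ^ r = f ^ s := by
  have hn : ∀ k : ℕ, ∃ i : ℤ, l ((b ^ k)⁻¹ * f ^ i) ≤ 2 * E + 6 * δ + l f := fun k =>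
    H.near hδ f E hE hgrow (b ^ k) (hb.pow_left k)
  choose i hi using hn
  obtain ⟨m, -, n, -, hne, heq⟩ := Set.infinite_univ.exists_ne_map_eq_of_mapsTo
    (f := fun k : ℕ => (b ^ k)⁻¹ * f ^ i k) (t := {g | l g ≤ 2 * E + 6 * δ + l f})
    (fun k _ => hi k) (H.fin _)
  refine ⟨(n : ℤ) - m, i n - i m, by omega, ?_⟩
  have heq' : (b ^ m)⁻¹ * f ^ i m = (b ^ n)⁻¹ * f ^ i n := heq
  rw [zpow_sub, zpow_sub, zpow_natCast, zpow_natCast]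
  rw [mul_inv_eq_iff_eq_mul, mul_assoc]
  have hc : Commute (f ^ i m)⁻¹ (b ^ m) := ((hb.pow_left m).zpow_right (i m)).symm.inv_left
  rw [hc.eq, ← mul_assoc, eq_mul_inv_iff_mul_eq]
  have hc2 : Commute (b ^ m) (f ^ i n) := (hb.pow_left m).zpow_right _
  rw [← hc2.eq]
  have hc3 : Commute (b ^ n) (b ^ m) := (Commute.refl b).pow_pow n m
  calc b ^ n * f ^ i m = b ^ n * b ^ m * ((b ^ m)⁻¹ * f ^ i m) := by group
    _ = b ^ m * b ^ n * ((b ^ n)⁻¹ * f ^ i n) := by rw [heq', hc3.eq]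
    _ = _ := by group

lemma natAbs_pow (H : HypLen l δ) (g : G) (n : ℤ) : l (g ^ n) = l (g ^ n.natAbs) := by
  rcases Int.natAbs_eq n with h | h
  · conv_lhs => rw [h, zpow_natCast]
  · conv_lhs => rw [h, zpow_neg, H.inv, zpow_natCast]

lemma abs_le (H : HypLen l δ) (hδ : 1 ≤ δ) (g : G) (hg : l g + 4 * δ ≤ l (g ^ 2))
    (α : G) (p q : ℤ) (hc : g ^ q = α * g ^ p * α⁻¹) : q.natAbs ≤ p.natAbs := by
  by_contra! hlt
  obtain ⟨d, hd⟩ := Nat.exists_eq_add_of_lt hlt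
  obtain ⟨n, hn⟩ := exists_nat_gt (2 * l α)
  have e : g ^ (q * n) = α * g ^ (p * n) * α⁻¹ := by
    rw [zpow_mul, hc, zpow_mul, zpow_natCast, zpow_natCast, conj_pow]
  have t1 := H.mul (α * g ^ (p * n)) α⁻¹
  have t2 := H.mul α (g ^ (p * n))
  rw [← e, H.inv, H.natAbs_pow, Int.natAbs_mul, Int.natAbs_natCast, hd] at t1
  rw [H.natAbs_pow _ (p * n), Int.natAbs_mul, Int.natAbs_natCast] at t2
  have t3 := H.incr' hδ g hg (p.natAbs * n) ((d + 1) * n)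
  rw [show p.natAbs * n + (d + 1) * n = (p.natAbs + d + 1) * n by ring] at t3
  have : (n : ℝ) ≤ (((d + 1) * n : ℕ) : ℝ) := by
    exact_mod_cast Nat.le_mul_of_pos_left n (Nat.succ_pos d)
  linarith

lemma main (H : HypLen l δ) (hδ : 1 ≤ δ) (h : G) (hord : ∀ n : ℤ, n ≠ 0 → h ^ n ≠ 1)
    (a : G) (p q : ℤ) (hp : p ≠ 0) (hconj : h ^ q = a * h ^ p * a⁻¹) :
    ∃ r s : ℤ, r ≠ 0 ∧ a ^ r = h ^ s := by
  obtain ⟨n, x, hn, hg⟩ := H.exists_loxo hδ h hord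
  have hpow : ∀ k : ℤ, (x⁻¹ * h ^ n * x) ^ k = x⁻¹ * h ^ (n * k) * x := by
    intro k
    have := conj_zpow (i := k) (a := x⁻¹) (b := h ^ n)
    rw [inv_inv] at this
    rw [this, zpow_mul, zpow_natCast]
  set g := x⁻¹ * h ^ n * x with hgdef
  have hc : g ^ q = (x⁻¹ * a * x) * g ^ p * (x⁻¹ * a * x)⁻¹ := by
    rw [hpow, hpow, mul_comm (n : ℤ) q, zpow_mul, hconj, zpow_natCast, conj_pow,
      mul_comm (n : ℤ) p, zpow_mul, zpow_natCast]
    group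
  have hc' : g ^ p = (x⁻¹ * a * x)⁻¹ * g ^ q * (x⁻¹ * a * x)⁻¹⁻¹ := by
    rw [hc]; group
  have h1 := H.abs_le hδ g hg _ _ _ hc
  have h2 := H.abs_le hδ g hg _ _ _ hc'
  have habs := le_antisymm h1 h2
  have hcomm : Commute ((x⁻¹ * a * x) ^ 2) (g ^ p) := by
    set α := x⁻¹ * a * x
    have hc1 : α * g ^ p = g ^ q * α := by rw [hc]; group
    rcases Int.natAbs_eq_natAbs_iff.mp habs with rfl | rfl
    · exact (show Commute α (g ^ q) from hc1).pow_left 2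
    · have hc2 : α * (g ^ p)⁻¹ = g ^ p * α := by
        rw [zpow_neg] at hc1
        rw [mul_inv_eq_iff_eq_mul, mul_assoc, hc1, mul_inv_cancel_left]
      rw [zpow_neg] at hc1
      show α ^ 2 * g ^ p = g ^ p * α ^ 2
      rw [pow_two, mul_assoc, hc1, ← mul_assoc, hc2, mul_assoc]
  have hcomm' : Commute ((x⁻¹ * a * x) ^ 2) (g ^ p.natAbs) := by
    rcases Int.natAbs_eq p with h | h
    · rw [h, zpow_natCast] at hcomm; exact hcomm
    · rw [h, zpow_neg, zpow_natCast] at hcomm; exact Commute.inv_right_iff.mp hcomm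
  obtain ⟨r, s, hr, hrs⟩ := H.commute_pow hδ (g ^ p.natAbs) (l g + 2 * δ)
    (by
      intro i j
      simp only [← pow_mul]
      rw [mul_add]
      exact H.quasi hδ g hg _ _)
    (by
      intro m
      rw [← pow_mul]
      have := H.incr' hδ g hg 0 (p.natAbs * m)
      rw [pow_zero, H.one, zero_add, zero_add] at this
      refine le_trans ?_ this
      exact_mod_cast Nat.le_mul_of_pos_left m (Int.natAbs_pos.mpr hp))
    _ hcomm'
  refine ⟨2 * r, n * (p.natAbs * s), by omega, ?_⟩
  rw [← zpow_natCast g, ← zpow_mul, hpow] at hrs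
  have e : ((x⁻¹ * a * x) ^ 2) ^ r = x⁻¹ * a ^ (2 * r) * x := by
    have := conj_zpow (i := 2 * r) (a := x⁻¹) (b := a)
    rw [inv_inv] at this
    rw [← this, zpow_mul, ← zpow_natCast]
    rfl
  rw [e] at hrs
  simpa using hrs

end HypLen

lemma wordDist_isLeast {G : Type*} [Group G] (S : Set G) (hS : Subgroup.closure S = ⊤) (g : G) :
    IsLeast {r : ℝ | ∃ l : List G, (∀ x ∈ l, x ∈ S ∨ x⁻¹ ∈ S) ∧ l.prod = g ∧ r = l.length}
      (wordDist S 1 g) := by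
  classical
  have hex : ∃ n : ℕ, ∃ l : List G, (∀ x ∈ l, x ∈ S ∨ x⁻¹ ∈ S) ∧ l.prod = g ∧ n = l.length := by
    have hg : g ∈ (Subgroup.closure S).toSubmonoid := by rw [hS]; trivial
    rw [Subgroup.closure_toSubmonoid] at hg
    obtain ⟨l, h1, h2⟩ := Submonoid.exists_list_of_mem_closure hg
    exact ⟨_, l, fun x hx => by simpa using h1 x hx, h2, rfl⟩
  have hl : IsLeast {r : ℝ | ∃ l : List G, (∀ x ∈ l, x ∈ S ∨ x⁻¹ ∈ S) ∧ l.prod = g ∧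
      r = l.length} ((Nat.find hex : ℕ) : ℝ) := by
    constructor
    · obtain ⟨l, h1, h2, h3⟩ := Nat.find_spec hex
      exact ⟨l, h1, h2, by rw [h3]⟩
    · rintro r ⟨l, h1, h2, rfl⟩
      exact_mod_cast Nat.find_min' hex ⟨l, h1, h2, rfl⟩
  have : wordDist S 1 g = ((Nat.find hex : ℕ) : ℝ) := by
    unfold wordDist
    rw [inv_one, one_mul]
    exact hl.csInf_eq
  rw [this]; exact hl

lemma wordDist_eq {G : Type*} [Group G] (S : Set G) (g k : G) :
    wordDist S g k = wordDist S 1 (g⁻¹ * k) := by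
  unfold wordDist; simp

lemma hypLen_wordDist {G : Type*} [Group G] (S : Set G) (hfin : S.Finite)
    (hS : Subgroup.closure S = ⊤) (δ : ℝ)
    (hyp : ∀ w x y z : G,
      gromovProd S w x y ≥ min (gromovProd S w x z) (gromovProd S w y z) - δ) :
    HypLen (fun g => wordDist S 1 g) (δ + 1) := by
  have hmin : ∀ (l : List G), (∀ x ∈ l, x ∈ S ∨ x⁻¹ ∈ S) → wordDist S 1 l.prod ≤ l.length :=
    fun l hl => (wordDist_isLeast S hS l.prod).2 ⟨l, hl, rfl, rfl⟩
  have hex : ∀ g, ∃ l : List G, (∀ x ∈ l, x ∈ S ∨ x⁻¹ ∈ S) ∧ l.prod = g ∧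
    wordDist S 1 g = l.length := fun g => (wordDist_isLeast S hS g).1
  have hmul : ∀ g k, wordDist S 1 (g * k) ≤ wordDist S 1 g + wordDist S 1 k := by
    intro g k
    obtain ⟨l, h1, h2, h3⟩ := hex g
    obtain ⟨m, h4, h5, h6⟩ := hex k
    have := hmin (l ++ m) (by
      intro x hx
      rcases List.mem_append.mp hx with h | h
      · exact h1 x h
      · exact h4 x h)
    rw [List.prod_append, h2, h5, List.length_append] at this
    push_cast at this
    linarith
  have hinv' : ∀ g, wordDist S 1 g⁻¹ ≤ wordDist S 1 g := by
    intro g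
    obtain ⟨l, h1, h2, h3⟩ := hex g
    have := hmin (l.map (·⁻¹)).reverse (by
      intro x hx
      simp only [List.mem_reverse, List.mem_map] at hx
      obtain ⟨y, hy, rfl⟩ := hx
      rw [inv_inv]
      exact (h1 y hy).symm)
    rw [← List.prod_inv_reverse, h2] at this
    simp only [List.length_reverse, List.length_map] at this
    linarith
  have hinv : ∀ g, wordDist S 1 g⁻¹ = wordDist S 1 g := fun g =>
    le_antisymm (hinv' g) (by simpa using hinv' g⁻¹)
  have hsymm : ∀ x y, wordDist S x y = wordDist S y x := by
    intro x y
    rw [wordDist_eq S x y, wordDist_eq S y x, ← hinv]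
    congr 1; group
  refine ⟨?_, hinv, hmul, ?_, ?_, ?_⟩
  · apply le_antisymm
    · simpa using hmin [] (by simp)
    · obtain ⟨l, -, -, h⟩ := hex 1
      rw [h]; positivity
  · intro x y z w
    have t := hyp w x y z
    simp only [← wordDist_eq]
    unfold gromovProd at t
    rcases min_choice ((wordDist S x w + wordDist S z w - wordDist S x z) / 2)
      ((wordDist S y w + wordDist S z w - wordDist S y z) / 2) with hm | hm
    · rw [hm] at t
      have := le_max_left (wordDist S x z + wordDist S y w) (wordDist S y z + wordDist S x w)
      linarith
    · rw [hm] at t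
      have := le_max_right (wordDist S x z + wordDist S y w) (wordDist S y z + wordDist S x w)
      linarith
  · intro v k hk
    obtain ⟨l, h1, h2, h3⟩ := hex v
    have hk' : k ≤ l.length := by
      have : (k : ℝ) ≤ l.length := by rw [← h3]; exact hk
      exact_mod_cast this
    have t1 := hmin (l.take k) (fun x hx => h1 x (List.mem_of_mem_take hx))
    have t2 := hmin (l.drop k) (fun x hx => h1 x (List.mem_of_mem_drop hx))
    have e : (l.take k).prod * (l.drop k).prod = v := by rw [List.prod_take_mul_prod_drop, h2]
    have e2 : (l.take k).prod⁻¹ * v = (l.drop k).prod := by rw [← e]; group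
    have t3 := hmul (l.take k).prod (l.drop k).prod
    rw [e] at t3
    rw [List.length_take, min_eq_left hk'] at t1
    rw [List.length_drop, Nat.cast_sub hk'] at t2
    refine ⟨(l.take k).prod, ?_, ?_⟩
    · show wordDist S 1 _ = _
      linarith
    · show wordDist S 1 _ = wordDist S 1 v - _
      rw [e2]
      linarith
  · intro K
    set T : Set G := {x | x ∈ S ∨ x⁻¹ ∈ S} with hT
    have hTf : T.Finite := by
      have : T = S ∪ S⁻¹ := by ext; simp [hT]
      rw [this]; exact hfin.union hfin.inv
    haveI : Finite T := hTf
    refine ((List.finite_length_le T ⌊K⌋₊).image (fun l => (l.map Subtype.val).prod)).subset ?_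
    intro g hg
    obtain ⟨l, h1, h2, h3⟩ := hex g
    have hg' : wordDist S 1 g ≤ K := hg
    lift l to List T using h1
    refine ⟨l, ?_, h2⟩
    rw [h3, List.length_map] at hg'
    exact Nat.le_floor hg'

/-- In a hyperbolic group, if `h` has infinite order, `p ≠ 0` and `h^q = a h^p a⁻¹`,
then some nonzero power of `a` is a power of `h`; in particular the subgroup
`⟨a^r⟩ ≤ ⟨h⟩` has finite index in `⟨a⟩`. -/
theorem stmt_2 {G : Type*} [Group G] (hG : IsHyperbolicGroup G)
    (h : G) (hord : ∀ n : ℤ, n ≠ 0 → h ^ n ≠ 1)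
    (a : G) (p q : ℤ) (hp : p ≠ 0) (hconj : h ^ q = a * h ^ p * a⁻¹) :
    ∃ r s : ℤ, r ≠ 0 ∧ a ^ r = h ^ s ∧
      Subgroup.zpowers (a ^ r) ≤ Subgroup.zpowers h ∧
      ((Subgroup.zpowers (a ^ r)).subgroupOf (Subgroup.zpowers a)).FiniteIndex := by
  obtain ⟨S, hfin, hS, δ, hδ, hyp⟩ := hG
  obtain ⟨r, s, hr, hrs⟩ :=
    (hypLen_wordDist S hfin hS δ hyp).main (by linarith) h hord a p q hp hconj
  refine ⟨r, s, hr, hrs, ?_, ?_⟩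
  · rw [Subgroup.zpowers_le, hrs]
    exact ⟨s, rfl⟩
  · rw [Subgroup.finiteIndex_iff_finite_quotient]
    refine Finite.of_surjective (α := Set.Ico (0 : ℤ) |r|)
      (fun i => QuotientGroup.mk ⟨a ^ (i : ℤ), i, rfl⟩) ?_
    intro z
    induction z using QuotientGroup.induction_on with
    | H z =>
      obtain ⟨_, n, rfl⟩ := z
      refine ⟨⟨n % r, Int.emod_nonneg n hr, Int.emod_lt_abs n hr⟩, ?_⟩
      rw [QuotientGroup.eq, Subgroup.mem_subgroupOf]
      refine ⟨n / r, ?_⟩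
      show (a ^ r) ^ (n / r) = (a ^ (n % r))⁻¹ * a ^ n
      rw [← zpow_mul, ← zpow_neg, ← zpow_add]
      congr 1
      have := Int.emod_add_mul_ediv n r
      linarith
end

section
/- Let G be a hyperbolic group and let h ∈ G be an element of infinite order. Then the cyclic subgroup ⟨h⟩ has finite index in the centralizer Z_G(h) = {g ∈ G | g h = h g} of h. -/
/-- Abstract data about the word metric. -/
structure HypData (G : Type*) [Group G] (d : G → G → ℝ) (δ : ℝ) : Prop where
  self : ∀ x, d x x = 0
  nonneg : ∀ x y, 0 ≤ d x y
  symm : ∀ x y, d x y = d y x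
  tri : ∀ x y z, d x z ≤ d x y + d y z
  inv : ∀ g x y, d (g * x) (g * y) = d x y
  fin : ∀ r : ℝ, {g : G | d 1 g ≤ r}.Finite
  mid : ∀ g, ∃ p, d 1 p + d p g = d 1 g ∧ d 1 g / 2 - 1 ≤ d 1 p ∧ d 1 g / 2 - 1 ≤ d p g
  dpos : 0 ≤ δ
  four : ∀ w x y z, d x y + d z w ≤ max (d x z + d y w) (d y z + d x w) + 2 * δ

lemma wordDist_le {G : Type*} [Group G] (S : Set G) (g h : G) (l : List G)
    (hl : ∀ x ∈ l, x ∈ S ∨ x⁻¹ ∈ S) (hp : l.prod = g⁻¹ * h) : wordDist S g h ≤ l.length := by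
  apply csInf_le
  · exact ⟨0, by rintro r ⟨l, -, -, rfl⟩; positivity⟩
  · exact ⟨l, hl, hp, rfl⟩

lemma exists_word {G : Type*} [Group G] (S : Set G) (hS : Subgroup.closure S = ⊤) (g : G) :
    ∃ l : List G, (∀ x ∈ l, x ∈ S ∨ x⁻¹ ∈ S) ∧ l.prod = g := by
  have hg : g ∈ (Subgroup.closure S).toSubmonoid := by rw [hS]; trivial
  rw [Subgroup.closure_toSubmonoid] at hg
  obtain ⟨l, h1, h2⟩ := Submonoid.exists_list_of_mem_closure hg
  exact ⟨l, fun x hx => by simpa using h1 x hx, h2⟩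

lemma wordDist_attained {G : Type*} [Group G] (S : Set G) (hS : Subgroup.closure S = ⊤)
    (g h : G) : ∃ l : List G, (∀ x ∈ l, x ∈ S ∨ x⁻¹ ∈ S) ∧ l.prod = g⁻¹ * h ∧
      wordDist S g h = l.length := by
  classical
  have hex : ∃ n : ℕ, ∃ l : List G, (∀ x ∈ l, x ∈ S ∨ x⁻¹ ∈ S) ∧ l.prod = g⁻¹ * h ∧
      l.length = n := by
    obtain ⟨l, h1, h2⟩ := exists_word S hS (g⁻¹ * h)
    exact ⟨_, l, h1, h2, rfl⟩
  obtain ⟨l, h1, h2, h3⟩ := Nat.find_spec hex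
  refine ⟨l, h1, h2, le_antisymm (wordDist_le S g h l h1 h2) ?_⟩
  apply le_csInf
  · exact ⟨_, l, h1, h2, rfl⟩
  · rintro r ⟨l', h1', h2', rfl⟩
    rw [h3]
    exact_mod_cast Nat.find_min' hex ⟨l', h1', h2', rfl⟩

lemma finite_words {G : Type*} [Group G] (S : Set G) (hS : S.Finite) (n : ℕ) :
    {g : G | ∃ l : List G, (∀ x ∈ l, x ∈ S ∨ x⁻¹ ∈ S) ∧ l.prod = g ∧ l.length ≤ n}.Finite := by
  have hT : {x : G | x ∈ S ∨ x⁻¹ ∈ S}.Finite :=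
    hS.union (hS.preimage inv_injective.injOn)
  have hT' : Finite {x : G | x ∈ S ∨ x⁻¹ ∈ S} := hT
  refine ((List.finite_length_le {x : G | x ∈ S ∨ x⁻¹ ∈ S} n).image
    (fun l => (l.map Subtype.val).prod)).subset ?_
  rintro g ⟨l, h1, h2, h3⟩
  refine ⟨l.attach.map (fun x => ⟨x.1, h1 x.1 x.2⟩), by simpa using h3, ?_⟩
  simp [List.map_map, Function.comp_def, h2]

lemma hypData {G : Type*} [Group G] (S : Set G) (hf : S.Finite) (hS : Subgroup.closure S = ⊤)
    (δ : ℝ) (hδ : 0 ≤ δ) (h4 : ∀ w x y z : G,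
      gromovProd S w x y ≥ min (gromovProd S w x z) (gromovProd S w y z) - δ) :
    HypData G (wordDist S) δ := by
  have nonneg : ∀ x y, 0 ≤ wordDist S x y := by
    intro x y
    obtain ⟨l, -, -, h⟩ := wordDist_attained S hS x y
    rw [h]; positivity
  have symm' : ∀ x y, wordDist S x y ≤ wordDist S y x := by
    intro x y
    obtain ⟨l, h1, h2, h⟩ := wordDist_attained S hS y x
    rw [h]
    have := wordDist_le S x y (l.map (·⁻¹)).reverse (by
      intro z hz
      simp only [List.mem_reverse, List.mem_map] at hz
      obtain ⟨w, hw, rfl⟩ := hz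
      have := h1 w hw
      rw [inv_inv]; tauto) (by
      rw [← List.prod_inv_reverse, h2]; group)
    simpa using this
  have tri : ∀ x y z, wordDist S x z ≤ wordDist S x y + wordDist S y z := by
    intro x y z
    obtain ⟨l, h1, h2, h⟩ := wordDist_attained S hS x y
    obtain ⟨l', h1', h2', h'⟩ := wordDist_attained S hS y z
    rw [h, h']
    have := wordDist_le S x z (l ++ l') (by
      intro w hw
      rcases List.mem_append.1 hw with hw | hw
      · exact h1 w hw
      · exact h1' w hw) (by rw [List.prod_append, h2, h2']; group)
    simpa using this
  refine ⟨?_, nonneg, fun x y => le_antisymm (symm' x y) (symm' y x), tri, ?_, ?_, ?_, hδ, ?_⟩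
  · intro x
    refine le_antisymm ?_ (nonneg x x)
    simpa using wordDist_le S x x [] (by simp) (by simp)
  · intro g x y
    unfold wordDist
    have : (g * x)⁻¹ * (g * y) = x⁻¹ * y := by group
    rw [this]
  · intro r
    refine (finite_words S hf ⌊r⌋₊).subset ?_
    intro g hg
    obtain ⟨l, h1, h2, h⟩ := wordDist_attained S hS 1 g
    refine ⟨l, h1, by simpa using h2, Nat.le_floor ?_⟩
    rw [← h]; exact hg
  · intro g
    obtain ⟨l, h1, h2, h⟩ := wordDist_attained S hS 1 g
    set k := l.length / 2 with hk
    have a1 := wordDist_le S 1 (l.take k).prod (l.take k)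
      (fun x hx => h1 x (List.mem_of_mem_take hx)) (by simp)
    have a2 := wordDist_le S (l.take k).prod g (l.drop k)
      (fun x hx => h1 x (List.mem_of_mem_drop hx)) (by
        rw [eq_inv_mul_iff_mul_eq, List.prod_take_mul_prod_drop, h2]; simp)
    have a3 := tri 1 (l.take k).prod g
    have e1 : ((l.take k).length : ℝ) + ((l.drop k).length : ℝ) = l.length := by
      rw [← Nat.cast_add, ← List.length_append, List.take_append_drop]
    have e2 : (l.length : ℝ) ≤ 2 * ((l.take k).length : ℝ) + 1 := by
      have : l.length ≤ 2 * (l.take k).length + 1 := by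
        rw [List.length_take]; omega
      exact_mod_cast this
    have e3 : 2 * ((l.take k).length : ℝ) ≤ l.length := by
      have : 2 * (l.take k).length ≤ l.length := by
        rw [List.length_take]; omega
      exact_mod_cast this
    refine ⟨(l.take k).prod, ?_, ?_, ?_⟩ <;> linarith
  · intro w x y z
    have := h4 w x y z
    unfold gromovProd at this
    rcases min_cases ((wordDist S x w + wordDist S z w - wordDist S x z) / 2)
      ((wordDist S y w + wordDist S z w - wordDist S y z) / 2) with ⟨e, _⟩ | ⟨e, _⟩
    · rw [e] at this
      have := le_max_right (wordDist S x z + wordDist S y w) (wordDist S y z + wordDist S x w)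
      have := le_max_left (wordDist S x z + wordDist S y w) (wordDist S y z + wordDist S x w)
      linarith
    · rw [e] at this
      have := le_max_right (wordDist S x z + wordDist S y w) (wordDist S y z + wordDist S x w)
      have := le_max_left (wordDist S x z + wordDist S y w) (wordDist S y z + wordDist S x w)
      linarith

section core
variable {G : Type*} [Group G] {d : G → G → ℝ} {δ : ℝ}

lemma disp_bounds (H : HypData G d δ) (x p : G) : |d 1 (x * p) - d 1 p| ≤ d 1 x := by
  have h1 := H.tri 1 x (x * p)
  have h2 := H.tri x 1 (x * p)
  have h3 := H.inv x 1 p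
  rw [mul_one] at h3
  have h4 := H.symm x 1
  rw [abs_le]; constructor <;> linarith

/-- displacement of points near the middle of the segment from `1` to `a`. -/
lemma disp_le (H : HypData G d δ) (a p x : G) (R : ℝ) (hx : x * a = a * x)
    (hp : d 1 p + d p a = d 1 a) (h1 : R + 2 * δ < d 1 p)
    (h2 : R + 2 * δ < d p a) (hxR : d 1 x ≤ R) :
    d p (x * p) ≤ |d 1 (x * p) - d 1 p| + 6 * δ := by
  have hδ := H.dpos
  set q := x * p with hq
  have b1 := abs_le.1 (disp_bounds H x p)
  rw [← hq] at b1
  have i1 : d x q = d 1 p := by have := H.inv x 1 p; rwa [mul_one] at this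
  have i2 : d q (x * a) = d p a := H.inv x p a
  have i3 : d x (x * a) = d 1 a := by have := H.inv x 1 a; rwa [mul_one] at this
  have i4 : d a (x * a) = d 1 x := by
    have := H.inv a 1 x; rw [mul_one] at this; rw [hx]; exact this
  have t1 := H.tri q a (x * a)
  have t2 := H.tri q (x * a) a
  have s1 := H.symm (x * a) a
  have s2 := H.symm q a
  have s3 := H.symm q x
  have s4 := H.symm q 1
  have s5 := H.symm x 1
  have s6 := H.symm p a
  have s7 := H.symm p q
  have s8 := H.symm q (x * a)
  have s9 := H.symm (x * a) x
  have s10 := H.symm (x * a) 1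
  have s11 := H.symm p 1
  have s12 := H.symm a 1
  have hle := le_abs_self (d 1 q - d 1 p)
  have hnle := neg_abs_le (d 1 q - d 1 p)
  -- four point with base q: (x|xa) vs (x|1), (1|xa); (1|xa) vs (1|a),(a|xa)
  have f1 := H.four q x (x * a) 1
  have f2 := H.four q 1 (x * a) a
  have key : d 1 q + d a q ≤ d 1 a + 4 * δ := by
    rcases le_max_iff.1 (sub_le_iff_le_add.2 f1) with f1 | f1 <;>
    rcases le_max_iff.1 (sub_le_iff_le_add.2 f2) with f2 | f2 <;> linarith
  have f3 := H.four q 1 a p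
  rcases le_max_iff.1 (sub_le_iff_le_add.2 f3) with f3 | f3 <;> linarith

lemma disp_hom (H : HypData G d δ) (a p x y : G) (R : ℝ) (hy : y * a = a * y)
    (hp : d 1 p + d p a = d 1 a) (h1 : 2 * R + 4 * δ < d 1 p)
    (h2 : 2 * R + 4 * δ < d p a) (hxR : d 1 x ≤ R) (hyR : d 1 y ≤ R) :
    |(d 1 (x * y * p) - d 1 p) - (d 1 (x * p) - d 1 p) - (d 1 (y * p) - d 1 p)| ≤ 2 * δ := by
  have hδ := H.dpos
  have hR : 0 ≤ R := (H.nonneg 1 x).trans hxR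
  have k := disp_le H a p y R hy hp (by linarith) (by linarith) hyR
  have by1 := disp_bounds H y p
  have by2 := abs_le.1 by1
  have bx2 := abs_le.1 (disp_bounds H x p)
  have bxy := abs_le.1 (disp_bounds H x (y * p))
  have e1 : d 1 (x * y * p) = d x⁻¹ (y * p) := by
    rw [← H.inv x x⁻¹ (y * p)]; simp [mul_assoc]
  have e2 : d 1 (x * p) = d x⁻¹ p := by
    rw [← H.inv x x⁻¹ p]; simp
  have e3 : d 1 x⁻¹ = d 1 x := by
    rw [← H.inv x 1 x⁻¹, H.symm]; simp
  rw [← mul_assoc, e1] at bxy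
  rw [e2] at bx2
  rw [e1, e2]
  -- points 1, u, z, w
  have g1 := H.four p 1 (y * p) x⁻¹
  have g2 := H.four (y * p) 1 p x⁻¹
  rw [H.symm (y * p) x⁻¹] at g1
  rw [H.symm p x⁻¹] at g2
  rw [H.symm (y * p) p] at g1
  rw [abs_le]
  constructor
  · rcases le_max_iff.1 (sub_le_iff_le_add.2 g1) with g1 | g1 <;> linarith
  · rcases le_max_iff.1 (sub_le_iff_le_add.2 g2) with g2 | g2 <;> linarith

lemma discrete_ivt (v : ℕ → ℝ) (B : ℝ) (hB : 0 ≤ B) (n : ℕ) (h0 : v 0 ≤ 0) (hn : 0 ≤ v n)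
    (hs : ∀ i < n, v (i + 1) ≤ v i + B) : ∃ i ≤ n, |v i| ≤ B := by
  classical
  have hex : ∃ i, 0 ≤ v i := ⟨n, hn⟩
  have hle : Nat.find hex ≤ n := Nat.find_min' hex hn
  have hsp := Nat.find_spec hex
  refine ⟨Nat.find hex, hle, ?_⟩
  rw [abs_of_nonneg hsp]
  rcases hc : Nat.find hex with _ | m
  · linarith
  · have := Nat.find_min hex (m := m) (by omega)
    have := hs m (by omega)
    push Not at *
    linarith

lemma growth (v : ℕ → ℝ) (n : ℕ) (hs : ∀ i < n, v i + 1 ≤ v (i + 1)) : v 0 + n ≤ v n := by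
  induction n with
  | zero => simp
  | succ k ih =>
    have := ih (fun i hi => hs i (by omega))
    have := hs k (by omega)
    push_cast; linarith

lemma ivt2 (v : ℕ → ℝ) (B : ℝ) (hB : 0 ≤ B) (M : ℕ) (hM : |v M| ≤ M)
    (hs : ∀ i < 2 * M, v i + 1 ≤ v (i + 1)) (hs' : ∀ i < 2 * M, v (i + 1) ≤ v i + B) :
    ∃ i ≤ 2 * M, |v i| ≤ B := by
  have hM' := abs_le.1 hM
  have a := growth v M (fun i hi => hs i (by omega))
  have b := growth (fun i => v (M + i)) M (fun i hi => by
    have := hs (M + i) (by omega); simpa [add_assoc] using this)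
  simp only [add_zero, ← two_mul] at b
  exact discrete_ivt v B hB (2 * M) (by linarith) (by linarith) hs'

lemma len_mul (H : HypData G d δ) (x y : G) : d 1 (x * y) ≤ d 1 x + d 1 y := by
  have h1 := H.tri 1 x (x * y)
  have h3 := H.inv x 1 y
  rw [mul_one] at h3
  linarith

lemma len_inv (H : HypData G d δ) (x : G) : d 1 x⁻¹ = d 1 x := by
  rw [← H.inv x 1 x⁻¹, H.symm]; simp

lemma len_pow (H : HypData G d δ) (x : G) (n : ℕ) : d 1 (x ^ n) ≤ n * d 1 x := by
  induction n with
  | zero => simp [H.self]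
  | succ k ih =>
    have := len_mul H (x ^ k) x
    rw [pow_succ]; push_cast; linarith

lemma len_zpow (H : HypData G d δ) (x : G) (j : ℤ) (n : ℕ) (hj : j.natAbs ≤ n) :
    d 1 (x ^ j) ≤ n * d 1 x := by
  have h0 := H.nonneg 1 x
  have : d 1 (x ^ j) ≤ j.natAbs * d 1 x := by
    rcases Int.natAbs_eq j with e | e
    · conv_lhs => rw [e]
      rw [zpow_natCast]; exact len_pow H x _
    · conv_lhs => rw [e]
      rw [zpow_neg, zpow_natCast, len_inv H]; exact len_pow H x _
  have h2 : (j.natAbs : ℝ) ≤ n := by exact_mod_cast hj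
  nlinarith

lemma zpow_inj_of {h : G} (hord : ∀ n : ℤ, n ≠ 0 → h ^ n ≠ 1) :
    Function.Injective (fun n : ℤ => h ^ n) := by
  intro a b hab
  by_contra hne
  apply hord (a - b) (by omega)
  simp only at hab
  rw [zpow_sub, hab, mul_inv_cancel]

lemma exists_long (H : HypData G d δ) {h : G} (hord : ∀ n : ℤ, n ≠ 0 → h ^ n ≠ 1) (r : ℝ) :
    ∃ n : ℤ, r < d 1 (h ^ n) := by
  by_contra hc
  push Not at hc
  have := (H.fin r).subset (t := Set.range (fun n : ℤ => h ^ n)) (by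
    rintro _ ⟨n, rfl⟩; exact hc n)
  exact Set.infinite_range_of_injective (zpow_inj_of hord) this

lemma exists_moving (H : HypData G d δ) {h : G} (hord : ∀ n : ℤ, n ≠ 0 → h ^ n ≠ 1) (c : ℝ) :
    ∃ K : ℕ, ∀ p : G, ∃ k ≤ K, c < d p (h ^ k * p) := by
  refine ⟨(H.fin c).toFinset.card, fun p => ?_⟩
  by_contra hc
  push Not at hc
  have := Finset.card_le_card_of_injOn (s := Finset.range ((H.fin c).toFinset.card + 1))
    (t := (H.fin c).toFinset) (fun k => p⁻¹ * (h ^ k * p)) (by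
      intro k hk
      have hk : k < (H.fin c).toFinset.card + 1 := by simpa using hk
      have := hc k (by omega)
      rw [← H.inv p⁻¹] at this
      simpa using this) (by
      intro a _ b _ hab
      simp only [mul_right_inj, mul_left_inj] at hab
      have := zpow_inj_of hord (a₁ := (a : ℤ)) (a₂ := (b : ℤ)) (by simpa using hab)
      exact_mod_cast this)
  simp at this

lemma core_lemma (H : HypData G d δ) {h : G} (hord : ∀ n : ℤ, n ≠ 0 → h ^ n ≠ 1) :
    ∃ C : ℝ, ∀ F : Finset G, (∀ x ∈ F, x * h = h * x) →
      ∃ p : G, ∀ x ∈ F, ∃ j : ℤ, d p (h ^ j * x * p) ≤ C := by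
  have hδ := H.dpos
  obtain ⟨K, hK⟩ := exists_moving H hord (8 * δ + 1)
  set D := K * d 1 h with hD
  have hh0 := H.nonneg 1 h
  have hD0 : 0 ≤ D := by positivity
  refine ⟨D + 8 * δ, fun F hF => ?_⟩
  obtain ⟨R0, hR0⟩ : ∃ M : ℕ, ∀ x ∈ F, d 1 x ≤ M := by
    obtain ⟨b, hb⟩ := (F.image (d 1)).bddAbove
    obtain ⟨M, hM⟩ := exists_nat_ge b
    exact ⟨M, fun x hx => (hb (by simpa using ⟨x, hx, rfl⟩)).trans hM⟩
  set R : ℝ := R0 + (R0 + 1) * D with hR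
  have hRD : D ≤ R := by rw [hR]; nlinarith [Nat.cast_nonneg (α := ℝ) R0]
  obtain ⟨N, hN⟩ := exists_long H hord (2 * (2 * R + 4 * δ + 1))
  obtain ⟨p, hp, hp1, hp2⟩ := H.mid (h ^ N)
  have g1 : 2 * R + 4 * δ < d 1 p := by linarith
  have g2 : 2 * R + 4 * δ < d p (h ^ N) := by linarith
  have hR0' : 0 ≤ R := hD0.trans hRD
  refine ⟨p, fun x hx => ?_⟩
  obtain ⟨k, hkK, hk⟩ := hK p
  set u := h ^ k with hu
  have huD : d 1 u ≤ D := by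
    have := len_pow H h k
    have : (k : ℝ) ≤ K := by exact_mod_cast hkK
    rw [hD]; nlinarith
  have cx : Commute x h := hF x hx
  have cu : Commute u h := (Commute.refl h).pow_left k
  have hdu := disp_le H (h ^ N) p u R (cu.zpow_right N) hp (by linarith) (by linarith)
    (huD.trans hRD)
  have hfu : 2 * δ + 1 ≤ |d 1 (u * p) - d 1 p| := by linarith
  have hfuD := (disp_bounds H u p).trans huD
  -- sequence
  set v : ℕ → ℝ := fun i => d 1 (u ^ ((i : ℤ) - R0) * x * p) - d 1 p with hv
  have hlen : ∀ i ≤ 2 * R0, d 1 (u ^ ((i : ℤ) - R0) * x) ≤ R := by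
    intro i hi
    have a1 := len_mul H (u ^ ((i : ℤ) - R0)) x
    have a2 := len_zpow H u ((i : ℤ) - R0) R0 (by omega)
    have a3 := hR0 x hx
    rw [hR]; nlinarith [Nat.cast_nonneg (α := ℝ) R0]
  have hcomm : ∀ i : ℕ, Commute (u ^ ((i : ℤ) - R0) * x) h :=
    fun i => (cu.zpow_left _).mul_left cx
  have hstep : ∀ i < 2 * R0, |v (i + 1) - (d 1 (u * p) - d 1 p) - v i| ≤ 2 * δ := by
    intro i hi
    have := disp_hom H (h ^ N) p u (u ^ ((i : ℤ) - R0) * x) R ((hcomm i).zpow_right N) hp g1 g2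
      (huD.trans hRD) (hlen i (by omega))
    have e : u * (u ^ ((i : ℤ) - R0) * x) = u ^ (((i + 1 : ℕ) : ℤ) - R0) * x := by
      rw [← mul_assoc, ← zpow_one_add]; congr 2; push_cast; ring
    rw [e] at this
    exact this
  have hmid : |v R0| ≤ R0 := by
    simp only [hv, sub_self, zpow_zero, one_mul]
    exact (disp_bounds H x p).trans (hR0 x hx)
  have hfin : ∃ i ≤ 2 * R0, |v i| ≤ D + 2 * δ := by
    have hD' := abs_le.1 hfuD
    rcases le_abs.1 hfu with hpos | hneg
    · apply ivt2 v _ (by linarith) R0 hmid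
      · intro i hi
        have := abs_le.1 (hstep i hi); linarith
      · intro i hi
        have := abs_le.1 (hstep i hi); linarith
    · have := ivt2 (fun i => - v i) (D + 2 * δ) (by linarith) R0 (by simpa using hmid)
        (by intro i hi
            have := abs_le.1 (hstep i hi); linarith)
        (by intro i hi
            have := abs_le.1 (hstep i hi); linarith)
      simpa using this
  obtain ⟨i, hi, hvi⟩ := hfin
  refine ⟨k * ((i : ℤ) - R0), ?_⟩
  have e : h ^ ((k : ℤ) * ((i : ℤ) - R0)) = u ^ ((i : ℤ) - R0) := by
    rw [zpow_mul, zpow_natCast]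
  rw [e]
  have := disp_le H (h ^ N) p (u ^ ((i : ℤ) - R0) * x) R ((hcomm i).zpow_right N) hp
    (by linarith) (by linarith) (hlen i hi)
  simp only [hv] at hvi
  linarith

end core

/-- In a hyperbolic group, the cyclic subgroup `⟨h⟩` generated by an element of infinite
order has finite index in the centralizer of `h`. -/
theorem stmt_3 {G : Type*} [Group G] (hG : IsHyperbolicGroup G)
    (h : G) (hord : ∀ n : ℤ, n ≠ 0 → h ^ n ≠ 1) :
    ((Subgroup.zpowers h).subgroupOf (Subgroup.centralizer {h})).FiniteIndex := by
  classical
  obtain ⟨S, hf, hS, δ, hδ, h4⟩ := hG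
  have H := hypData S hf hS δ hδ h4
  obtain ⟨C, hC⟩ := core_lemma H hord
  have hcen : ∀ x : Subgroup.centralizer {h}, (x : G) * h = h * x := fun x =>
    (Subgroup.mem_centralizer_singleton_iff.1 x.2)
  suffices hfin : Finite (Subgroup.centralizer {h} ⧸
      (Subgroup.zpowers h).subgroupOf (Subgroup.centralizer {h})) from
    Subgroup.finiteIndex_of_finite_quotient
  by_contra hinf
  rw [not_finite_iff_infinite] at hinf
  obtain ⟨Q, hQ⟩ := Infinite.exists_subset_card_eq (Subgroup.centralizer {h} ⧸
      (Subgroup.zpowers h).subgroupOf (Subgroup.centralizer {h})) ((H.fin C).toFinset.card + 1)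
  obtain ⟨p, hp⟩ := hC (Q.image (fun q => (q.out : G))) (by
    intro x hx
    obtain ⟨q, -, rfl⟩ := Finset.mem_image.1 hx
    exact hcen _)
  have hp' : ∀ q, ∃ j : ℤ, q ∈ Q → wordDist S p (h ^ j * (q.out : G) * p) ≤ C := by
    intro q
    by_cases hq : q ∈ Q
    · obtain ⟨j, hj⟩ := hp _ (Finset.mem_image_of_mem _ hq)
      exact ⟨j, fun _ => hj⟩
    · exact ⟨0, fun hq' => absurd hq' hq⟩
  choose j hj using hp'
  obtain ⟨q, hq, q', hq', hne, heq⟩ := Finset.exists_ne_map_eq_of_card_lt_of_maps_to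
    (s := Q) (t := (H.fin C).toFinset) (by omega)
    (f := fun q => p⁻¹ * (h ^ j q * (q.out : G) * p)) (by
      intro q hq
      have := hj q hq
      rw [← H.inv p⁻¹] at this
      simpa using this)
  apply hne
  simp only [mul_right_inj, mul_left_inj] at heq
  rw [← q.out_eq, ← q'.out_eq]
  apply QuotientGroup.eq.2
  rw [Subgroup.mem_subgroupOf, Subgroup.mem_zpowers_iff]
  refine ⟨j q - j q', ?_⟩
  have c : Commute (q.out : G) (h ^ (j q - j q')) := Commute.zpow_right (hcen _) _
  have e : (q'.out : G) = h ^ (j q - j q') * (q.out : G) := by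
    rw [sub_eq_neg_add, zpow_add, mul_assoc, heq, zpow_neg, inv_mul_cancel_left]
  push_cast
  rw [e, ← c.eq, inv_mul_cancel_left]
end

section
/- A hyperbolic group contains no Baumslag–Solitar group as a subgroup: if G is a hyperbolic group, then for all nonzero integers p and q there is no injective group homomorphism from BS(p,q) into G. -/
/-- The Baumslag–Solitar group `BS(p,q) = ⟨a, t | t a^p t⁻¹ = a^q⟩`, presented on two
generators indexed by `Bool` (`false ↦ a`, `true ↦ t`) with the single relator
`t a^p t⁻¹ a^(-q)`. -/
def BaumslagSolitar (p q : ℤ) : Type :=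
  PresentedGroup ({FreeGroup.of true * FreeGroup.of false ^ p * (FreeGroup.of true)⁻¹ *
    FreeGroup.of false ^ (-q)} : Set (FreeGroup Bool))

noncomputable instance (p q : ℤ) : Group (BaumslagSolitar p q) :=
  inferInstanceAs (Group (PresentedGroup _))

namespace BSHyp

variable {G : Type*} [Group G]

def IsWord (S : Set G) (l : List G) : Prop := ∀ x ∈ l, x ∈ S ∨ x⁻¹ ∈ S

noncomputable def len (S : Set G) (g : G) : ℕ :=
  sInf {n : ℕ | ∃ l : List G, IsWord S l ∧ l.prod = g ∧ l.length = n}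

lemma exists_word {S : Set G} (hS : Subgroup.closure S = ⊤) (g : G) :
    ∃ l : List G, IsWord S l ∧ l.prod = g := by
  have : g ∈ Subgroup.closure S := by rw [hS]; trivial
  rw [← Subgroup.mem_toSubmonoid, Subgroup.closure_toSubmonoid] at this
  obtain ⟨l, h1, h2⟩ := Submonoid.exists_list_of_mem_closure this
  exact ⟨l, h1, h2⟩

lemma exists_min {S : Set G} (hS : Subgroup.closure S = ⊤) (g : G) :
    ∃ l : List G, IsWord S l ∧ l.prod = g ∧ l.length = len S g := by
  have hne : {n : ℕ | ∃ l : List G, IsWord S l ∧ l.prod = g ∧ l.length = n}.Nonempty := by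
    obtain ⟨l, h1, h2⟩ := exists_word hS g
    exact ⟨l.length, l, h1, h2, rfl⟩
  exact Nat.sInf_mem hne

lemma len_le {S : Set G} {l : List G} (hl : IsWord S l) : len S l.prod ≤ l.length :=
  Nat.sInf_le ⟨l, hl, rfl, rfl⟩

lemma wordDist_eq {S : Set G} (hS : Subgroup.closure S = ⊤) (g h : G) :
    wordDist S g h = len S (g⁻¹ * h) := by
  obtain ⟨l, h1, h2, h3⟩ := exists_min hS (g⁻¹ * h)
  have : IsLeast {r : ℝ | ∃ l : List G, (∀ x ∈ l, x ∈ S ∨ x⁻¹ ∈ S) ∧ l.prod = g⁻¹ * h ∧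
      r = l.length} (len S (g⁻¹ * h) : ℝ) := by
    constructor
    · exact ⟨l, h1, h2, by rw [h3]⟩
    · rintro r ⟨l', h1', h2', rfl⟩
      have := len_le (S := S) h1'
      rw [h2'] at this
      exact_mod_cast this
  exact this.csInf_eq

lemma len_one {S : Set G} : len S (1 : G) = 0 := by
  have := len_le (S := S) (l := []) (by intro x hx; simp at hx)
  simpa using this

lemma len_mul {S : Set G} (hS : Subgroup.closure S = ⊤) (g h : G) :
    len S (g * h) ≤ len S g + len S h := by
  obtain ⟨l, h1, h2, h3⟩ := exists_min hS g
  obtain ⟨l', h1', h2', h3'⟩ := exists_min hS h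
  have hw : IsWord S (l ++ l') := by
    intro x hx
    rcases List.mem_append.1 hx with hx | hx
    · exact h1 x hx
    · exact h1' x hx
  have := len_le hw
  rw [List.prod_append, List.length_append, h2, h2', h3, h3'] at this
  exact this

lemma len_inv_le {S : Set G} (hS : Subgroup.closure S = ⊤) (g : G) :
    len S g⁻¹ ≤ len S g := by
  obtain ⟨l, h1, h2, h3⟩ := exists_min hS g
  have hw : IsWord S (l.map (·⁻¹)).reverse := by
    intro x hx
    simp only [List.mem_reverse, List.mem_map] at hx
    obtain ⟨y, hy, rfl⟩ := hx
    have := h1 y hy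
    rw [inv_inv]
    exact this.symm
  have := len_le hw
  rw [← List.prod_inv_reverse, h2] at this
  simpa [h3] using this

lemma len_inv {S : Set G} (hS : Subgroup.closure S = ⊤) (g : G) :
    len S g⁻¹ = len S g := by
  apply le_antisymm (len_inv_le hS g)
  simpa using len_inv_le hS g⁻¹

lemma len_pow {S : Set G} (hS : Subgroup.closure S = ⊤) (g : G) (n : ℕ) :
    len S (g ^ n) ≤ n * len S g := by
  induction n with
  | zero => simp [len_one]
  | succ k ih =>
    rw [pow_succ]
    have := len_mul hS (g ^ k) g
    linarith

lemma ball_finite {S : Set G} (hS : Subgroup.closure S = ⊤) (hf : S.Finite) (n : ℕ) :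
    {g : G | len S g ≤ n}.Finite := by
  have key : ∀ n : ℕ, {g : G | ∃ l : List G, IsWord S l ∧ l.prod = g ∧ l.length = n}.Finite := by
    intro n
    induction n with
    | zero =>
      refine (Set.finite_singleton (1 : G)).subset ?_
      rintro g ⟨l, h1, h2, h3⟩
      rw [List.length_eq_zero_iff] at h3
      subst h3
      simpa using h2.symm
    | succ k ih =>
      have hfin : (S ∪ S⁻¹).Finite := hf.union hf.inv
      refine (Set.Finite.image2 (fun a b : G => a * b) hfin ih).subset ?_
      rintro g ⟨l, h1, h2, h3⟩
      cases l with
      | nil => simp at h3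
      | cons x l =>
        refine ⟨x, ?_, l.prod, ⟨l, fun y hy => h1 y (List.mem_cons_of_mem _ hy), rfl, ?_⟩, ?_⟩
        · exact h1 x List.mem_cons_self
        · simpa using h3
        · simpa using h2
  refine ((Set.finite_Iic n).biUnion (fun i _ => key i)).subset ?_
  intro g hg
  obtain ⟨l, h1, h2, h3⟩ := exists_min hS g
  simp only [Set.mem_iUnion]
  exact ⟨len S g, hg, l, h1, h2, h3⟩

lemma exists_geod {S : Set G} (hS : Subgroup.closure S = ⊤) (x : G) (k : ℕ) :
    ∃ z : G, k ≤ len S x → (len S z = k ∧ len S (z⁻¹ * x) + k = len S x) := by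
  obtain ⟨l, h1, h2, h3⟩ := exists_min hS x
  refine ⟨(l.take k).prod, fun hk => ?_⟩
  have e : (l.take k).prod * (l.drop k).prod = x := by
    rw [List.prod_take_mul_prod_drop, h2]
  have e' : (l.take k).prod⁻¹ * x = (l.drop k).prod := by
    rw [← e]; group
  have w1 : IsWord S (l.take k) := fun y hy => h1 y (List.mem_of_mem_take hy)
  have w2 : IsWord S (l.drop k) := fun y hy => h1 y (List.mem_of_mem_drop hy)
  have a1 := len_le w1
  have a2 := len_le w2
  have a3 := len_mul hS (l.take k).prod (l.drop k).prod
  rw [e] at a3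
  rw [e']
  rw [List.length_take, h3, min_eq_left hk] at a1
  rw [List.length_drop, h3] at a2
  omega

/-- centralizers of infinite order elements have linear growth -/
lemma linear_growth {S : Set G} (hS : Subgroup.closure S = ⊤) (hf : S.Finite) {δ : ℝ}
    (hδ : 0 ≤ δ) (H : ∀ w x y z : G,
      gromovProd S w x y ≥ min (gromovProd S w x z) (gromovProd S w y z) - δ)
    (g : G) (hg : ¬ IsOfFinOrder g) :
    ∃ A : ℕ, ∀ (R : ℕ) (F : Finset G), (∀ f ∈ F, Commute f g ∧ len S f ≤ R) →
      F.card ≤ (2 * R + 1) * A := by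
  classical
  obtain ⟨D, hD⟩ := exists_nat_ge (6 * δ)
  have hBf := ball_finite hS hf D
  refine ⟨hBf.toFinset.card, fun R F hF => ?_⟩
  -- a long power
  obtain ⟨N, hN⟩ : ∃ N : ℕ, 2 * (2 * R + D + 2) < len S (g ^ N) := by
    by_contra! hcon
    have hinj : Function.Injective (fun n : ℕ => g ^ n) :=
      injective_pow_iff_not_isOfFinOrder.2 hg
    exact Set.infinite_of_injective_forall_mem hinj
      (s := {x : G | len S x ≤ 2 * (2 * R + D + 2)}) hcon (ball_finite hS hf _)
  set x := g ^ N with hx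
  set L := len S x with hL
  choose γ hγ using exists_geod hS x
  set i0 := L / 2 with hi0
  have hm := hγ i0 (by omega)
  set m := γ i0 with hmdef
  -- metric facts
  let d : G → G → ℝ := fun a b => (len S (a⁻¹ * b) : ℝ)
  have dsymm : ∀ a b, d a b = d b a := by
    intro a b
    simp only [d]
    rw [← len_inv hS (a⁻¹ * b)]
    congr 2; group
  have dtri : ∀ a b c, d a c ≤ d a b + d b c := by
    intro a b c
    simp only [d]
    have := len_mul hS (a⁻¹ * b) (b⁻¹ * c)
    rw [show a⁻¹ * b * (b⁻¹ * c) = a⁻¹ * c by group] at this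
    exact_mod_cast this
  have dinv : ∀ c a b, d (c * a) (c * b) = d a b := by
    intro c a b
    simp only [d]
    congr 2; group
  have H' : ∀ w x y z : G, min ((d x w + d z w - d x z) / 2) ((d y w + d z w - d y z) / 2) - δ ≤
      (d x w + d y w - d x y) / 2 := by
    intro w x y z
    have := H w x y z
    simp only [gromovProd, wordDist_eq hS] at this
    exact this
  have d1x : d 1 x = L := by simp [d, hL]
  have d1m : d 1 m = i0 := by simp [d, hm.1]
  have dmx : d m x + i0 = L := by
    simp only [d]; exact_mod_cast hm.2
  have hi1 : (2 * R + D + 2 : ℝ) ≤ i0 := by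
    have : 2 * R + D + 2 ≤ i0 := by omega
    exact_mod_cast this
  have hi2 : (i0 : ℝ) + (2 * R + D + 2 : ℝ) ≤ L := by
    have : i0 + (2 * R + D + 2) ≤ L := by omega
    exact_mod_cast this
  have hR0 : (0 : ℝ) ≤ R := Nat.cast_nonneg R
  -- main estimate
  have main : ∀ f ∈ F, len S (f * m) ∈ Finset.Icc (i0 - R) (i0 + R) ∧
      (γ (len S (f * m)))⁻¹ * (f * m) ∈ hBf.toFinset := by
    intro f hfF
    obtain ⟨hc, hlf⟩ := hF f hfF
    have hlfR : (len S f : ℝ) ≤ R := by exact_mod_cast hlf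
    set y := f * m with hy
    have e1 : d f y = i0 := by
      have := dinv f 1 m
      rw [mul_one] at this
      rw [this, d1m]
    have e2 : d y (f * x) + i0 = L := by rw [dinv, dmx]
    have e3 : d 1 f ≤ R := by simpa [d] using hlfR
    have e4 : d x (f * x) ≤ R := by
      have hcx : f * x = x * f := (hc.pow_right N).eq
      simp only [d]
      rw [hcx, inv_mul_cancel_left]
      exact hlfR
    have e5 : d f (f * x) = L := by
      have := dinv f 1 x
      rw [mul_one] at this
      rw [this, d1x]
    have h1 := H' y f (f * x) 1
    have h2 := H' y 1 (f * x) x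
    have s1 := dsymm 1 y
    have s2 := dsymm x y
    have s3 := dsymm f 1
    have s4 := dsymm f y
    have s5 := dsymm (f * x) y
    have s6 := dsymm (f * x) x
    have s7 := dsymm (f * x) 1
    have t1 := dtri 1 f y
    have t2 := dtri f 1 y
    have t3 := dtri x (f * x) y
    have t4 := dtri (f * x) x y
    have k1 : (d f y + d 1 y - d f 1) / 2 - δ > δ := by linarith
    have k2 : ((d (f * x) y + d x y - d (f * x) x) / 2) > 2 * δ := by linarith
    have k3 : (d 1 y + d (f * x) y - d 1 (f * x)) / 2 ≤ δ := by
      rcases min_le_iff.1 (show min ((d f y + d 1 y - d f 1) / 2)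
        ((d (f * x) y + d 1 y - d (f * x) 1) / 2) ≤ δ by linarith) with h | h <;> linarith
    have k4 : (d 1 y + d x y - d 1 x) / 2 ≤ 2 * δ := by
      rcases min_le_iff.1 (show min ((d 1 y + d x y - d 1 x) / 2)
        ((d (f * x) y + d x y - d (f * x) x) / 2) ≤ 2 * δ by linarith) with h | h <;> linarith
    set k := len S y with hk
    have d1y : d 1 y = k := by simp [d, hk]
    have kup : k ≤ i0 + R := by
      have : (k : ℝ) ≤ i0 + R := by linarith
      exact_mod_cast this
    have klo : i0 ≤ k + R := by
      have : (i0 : ℝ) ≤ k + R := by linarith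
      exact_mod_cast this
    have hz := hγ k (by omega)
    set z := γ k
    have d1z : d 1 z = k := by simp [d, hz.1]
    have dzx : d z x + k = L := by
      simp only [d]; exact_mod_cast hz.2
    have h3 := H' z 1 x y
    have r1 := dsymm y z
    have r2 := dsymm x z
    have hfin : d z y ≤ D := by
      rcases min_le_iff.1 (show min ((d 1 z + d y z - d 1 y) / 2)
        ((d x z + d y z - d x y) / 2) ≤ δ by linarith) with h | h <;> linarith
    refine ⟨Finset.mem_Icc.2 ⟨by omega, kup⟩, ?_⟩
    rw [Set.Finite.mem_toFinset]
    show len S (z⁻¹ * y) ≤ D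
    have hfin' : (len S (z⁻¹ * y) : ℝ) ≤ D := hfin
    exact_mod_cast hfin'
  have hcard : F.card ≤ (Finset.Icc (i0 - R) (i0 + R) ×ˢ hBf.toFinset).card := by
    refine Finset.card_le_card_of_injOn
      (fun f => (len S (f * m), (γ (len S (f * m)))⁻¹ * (f * m))) ?_ ?_
    · intro f hfF
      exact Finset.mem_coe.2 (Finset.mem_product.2 (main f hfF))
    · intro f _ f' _ hff
      simp only [Prod.mk.injEq] at hff
      rw [hff.1] at hff
      exact mul_right_cancel (mul_left_cancel hff.2)
  rw [Finset.card_product, Nat.card_Icc] at hcard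
  refine hcard.trans (Nat.mul_le_mul_right _ (by omega))

/-- no commuting independent pair -/
lemma no_Z2 (hG : IsHyperbolicGroup G) (g u : G) (hc : Commute g u)
    (hinj : Function.Injective (fun ij : ℕ × ℕ => g ^ ij.1 * u ^ ij.2)) : False := by
  classical
  obtain ⟨S, hf, hS, δ, hδ, H⟩ := hG
  have hg : ¬ IsOfFinOrder g := by
    rw [← injective_pow_iff_not_isOfFinOrder]
    intro a b hab
    have := @hinj (a, 0) (b, 0) (by simpa using hab)
    simpa using this
  obtain ⟨A, hA⟩ := linear_growth hS hf hδ H g hg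
  set C := len S g + len S u
  set K := A * (2 * C + 1)
  have := hA (K * C) ((Finset.range (K + 1) ×ˢ Finset.range (K + 1)).image
    (fun ij : ℕ × ℕ => g ^ ij.1 * u ^ ij.2)) ?_
  · rw [Finset.card_image_of_injective _ hinj, Finset.card_product, Finset.card_range] at this
    have e : (2 * (K * C) + 1) * A ≤ (K + 1) * (A * (2 * C + 1)) := by nlinarith
    change _ ≤ (K + 1) * K at e
    nlinarith
  · intro f hfm
    obtain ⟨⟨i, j⟩, hij, rfl⟩ := Finset.mem_image.1 hfm
    simp only [Finset.mem_product, Finset.mem_range] at hij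
    refine ⟨(((Commute.refl g).pow_left i).mul_left (hc.symm.pow_left j)), ?_⟩
    have a1 := len_mul hS (g ^ i) (u ^ j)
    have a2 := len_pow hS g i
    have a3 := len_pow hS u j
    have a4 : i * len S g ≤ K * len S g := Nat.mul_le_mul_right _ (by omega)
    have a5 : j * len S u ≤ K * len S u := Nat.mul_le_mul_right _ (by omega)
    have : K * C = K * len S g + K * len S u := by simp only [C]; ring
    show len S (g ^ i * u ^ j) ≤ _
    omega

lemma no_distort (hG : IsHyperbolicGroup G) (a t : G) (p q : ℤ) (hpq : p.natAbs < q.natAbs)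
    (hp : p ≠ 0) (hr : t * a ^ p * t⁻¹ = a ^ q) (ha : ¬ IsOfFinOrder a) : False := by
  classical
  obtain ⟨S, hf, hS, δ, hδ, H⟩ := hG
  obtain ⟨A, hA⟩ := linear_growth hS hf hδ H a ha
  set P := p.natAbs with hP
  set Q := q.natAbs with hQ
  have hP0 : 0 < P := Int.natAbs_pos.2 hp
  have hQP : (P : ℝ) < Q := by exact_mod_cast hpq
  have hP0' : (0 : ℝ) < P := by exact_mod_cast hP0
  set lam : ℝ := Q / P with hlam
  have hlam1 : 1 < lam := by rw [hlam, one_lt_div hP0']; exact hQP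
  set C := 2 * len S t + Q * len S a + len S a with hC
  have zlen : ∀ n : ℤ, len S (a ^ n) ≤ n.natAbs * len S a := by
    intro n
    rcases Int.natAbs_eq n with h | h
    · conv_lhs => rw [h]
      rw [zpow_natCast]; exact len_pow hS a _
    · conv_lhs => rw [h]
      rw [zpow_neg, zpow_natCast, len_inv hS]; exact len_pow hS a _
  have key : ∀ K : ℕ, ∀ n : ℤ, (n.natAbs : ℝ) ≤ lam ^ K → len S (a ^ n) ≤ C * (K + 1) := by
    intro K
    induction K with
    | zero =>
      intro n hn
      rw [pow_zero] at hn
      have hn' : n.natAbs ≤ 1 := by exact_mod_cast hn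
      have := zlen n
      have h2 : n.natAbs * len S a ≤ 1 * len S a := Nat.mul_le_mul_right _ hn'
      have : len S a ≤ C := by omega
      omega
    | succ K ih =>
      intro n hn
      set k := n.tdiv q with hk
      set r := n.tmod q with hrdef
      have hn2 : n = q * k + r := (Int.mul_tdiv_add_tmod n q).symm
      have hr1 : r.natAbs ≤ Q := by
        rw [hrdef, Int.natAbs_tmod]
        exact (Nat.mod_lt _ (by omega)).le
      have hk1 : k.natAbs * Q ≤ n.natAbs := by
        rw [hk, Int.natAbs_tdiv]
        exact Nat.div_mul_le_self _ _
      have hpk : ((p * k).natAbs : ℝ) ≤ lam ^ K := by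
        rw [Int.natAbs_mul, Nat.cast_mul]
        have hk2 : (k.natAbs : ℝ) * Q ≤ lam ^ K * (Q / P) := by
          have : (k.natAbs : ℝ) * Q ≤ n.natAbs := by exact_mod_cast hk1
          rw [pow_succ] at hn
          exact this.trans hn
        have hQ0 : (0 : ℝ) < Q := hP0'.trans hQP
        rw [← mul_div_assoc, le_div_iff₀ hP0'] at hk2
        have : ((P : ℝ) * k.natAbs) * Q ≤ lam ^ K * Q := by nlinarith
        have h := le_of_mul_le_mul_right this hQ0
        exact h
      have h1 := ih (p * k) hpk
      have e : a ^ n = t * a ^ (p * k) * t⁻¹ * a ^ r := by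
        rw [zpow_mul, ← conj_zpow, hr, ← zpow_mul, ← zpow_add, ← hn2]
      have b1 := len_mul hS (t * a ^ (p * k) * t⁻¹) (a ^ r)
      have b2 := len_mul hS (t * a ^ (p * k)) t⁻¹
      have b3 := len_mul hS t (a ^ (p * k))
      have b4 := len_inv hS t
      have b5 := zlen r
      have b6 : r.natAbs * len S a ≤ Q * len S a := Nat.mul_le_mul_right _ hr1
      rw [e]
      have : C * (K + 1 + 1) = C * (K + 1) + C := by ring
      omega
  have bound : ∀ K : ℕ, lam ^ K ≤ ((2 * (C * (K + 1)) + 1) * A : ℕ) := by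
    intro K
    have hl0 : 0 ≤ lam ^ K := by positivity
    have := hA (C * (K + 1)) ((Finset.range (⌊lam ^ K⌋₊ + 1)).image (fun n : ℕ => a ^ n)) ?_
    · rw [Finset.card_image_of_injective _ (injective_pow_iff_not_isOfFinOrder.2 ha),
        Finset.card_range] at this
      have h2 := Nat.lt_floor_add_one (lam ^ K)
      refine h2.le.trans ?_
      exact_mod_cast this
    · intro f hfm
      obtain ⟨n, hn, rfl⟩ := Finset.mem_image.1 hfm
      refine ⟨(Commute.refl a).pow_left n, ?_⟩
      have h := key K n ?_
      · simpa using h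
      · have : n ≤ ⌊lam ^ K⌋₊ := by simpa [Nat.lt_succ_iff] using hn
        simpa using (Nat.le_floor_iff hl0).1 this
  -- exponential beats linear
  have lim := tendsto_pow_const_div_const_pow_of_one_lt 1 hlam1
  have lim0 := tendsto_pow_const_div_const_pow_of_one_lt 0 hlam1
  have lim2 := (lim.const_mul (2 * C * A : ℝ)).add (lim0.const_mul ((2 * C + 1) * A : ℝ))
  rw [mul_zero, mul_zero, add_zero] at lim2
  obtain ⟨K, hK⟩ := (lim2.eventually (gt_mem_nhds (show (0 : ℝ) < 1 by norm_num))).exists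
  have hpos : 0 < lam ^ K := by positivity
  have hb := bound K
  push_cast at hb
  have : 2 * C * A * ((K : ℝ) ^ 1 / lam ^ K) + (2 * C + 1) * A * ((K : ℝ) ^ 0 / lam ^ K) =
      ((2 * (C * (K + 1)) + 1) * A) / lam ^ K := by
    field_simp
    ring
  rw [this, div_lt_one hpos] at hK
  linarith

/-- Universal property. -/
lemma bs_lift {M : Type*} [Group M] (p q : ℤ) (a t : M) (h : t * a ^ p * t⁻¹ = a ^ q) :
    ∃ ψ : BaumslagSolitar p q →* M,
      ψ (PresentedGroup.of false) = a ∧ ψ (PresentedGroup.of true) = t := by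
  let f : Bool → M := fun b => if b then t else a
  have hrel : ∀ r ∈ ({FreeGroup.of true * FreeGroup.of false ^ p * (FreeGroup.of true)⁻¹ *
    FreeGroup.of false ^ (-q)} : Set (FreeGroup Bool)), FreeGroup.lift f r = 1 := by
    intro r hr
    rw [Set.mem_singleton_iff] at hr
    subst hr
    simp [f, h]
  refine ⟨PresentedGroup.toGroup hrel, ?_, ?_⟩
  · exact (PresentedGroup.toGroup.of hrel).trans (by simp [f])
  · exact (PresentedGroup.toGroup.of hrel).trans (by simp [f])

def bsA (p q : ℤ) : BaumslagSolitar p q := PresentedGroup.of false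
def bsT (p q : ℤ) : BaumslagSolitar p q := PresentedGroup.of true

lemma bs_rel (p q : ℤ) : bsT p q * bsA p q ^ p * (bsT p q)⁻¹ = bsA p q ^ q := by
  have h : PresentedGroup.mk ({FreeGroup.of true * FreeGroup.of false ^ p *
    (FreeGroup.of true)⁻¹ * FreeGroup.of false ^ (-q)} : Set (FreeGroup Bool))
    (FreeGroup.of true * FreeGroup.of false ^ p *
    (FreeGroup.of true)⁻¹ * FreeGroup.of false ^ (-q)) = 1 :=
    PresentedGroup.one_of_mem (Set.mem_singleton _)
  rw [map_mul, map_mul, map_mul, map_inv, map_zpow, map_zpow, zpow_neg (PresentedGroup.mk _ _), mul_inv_eq_one] at h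
  exact h

lemma bsA_zpow (p q : ℤ) (hp : p ≠ 0) (hq : q ≠ 0) (n : ℤ) (h : bsA p q ^ n = 1) : n = 0 := by
  have hp' : (p : ℚ) ≠ 0 := by exact_mod_cast hp
  have hq' : (q : ℚ) ≠ 0 := by exact_mod_cast hq
  have hc : (q : ℚ) / p ≠ 0 := div_ne_zero hq' hp'
  let a : Equiv.Perm ℚ := Equiv.addRight 1
  let t : Equiv.Perm ℚ := Equiv.mulRight₀ ((q : ℚ) / p) hc
  have az : ∀ n : ℤ, ∀ x : ℚ, (a ^ n) x = x + n := by
    intro n x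
    simp [a]
  obtain ⟨ψ, h1, h2⟩ := bs_lift p q a t (by
    ext x
    rw [mul_inv_eq_iff_eq_mul.2]
    ext x
    simp only [Equiv.Perm.mul_apply, az]
    simp [t]
    field_simp)
  have := congrArg ψ h
  rw [map_zpow, map_one] at this
  change (ψ (PresentedGroup.of false)) ^ n = 1 at this
  rw [h1] at this
  have h3 := az n 0
  rw [this] at h3
  simpa using h3.symm

lemma comm_sq (a t : G) (p q : ℤ) (heq : p.natAbs = q.natAbs)
    (hr0 : t * a ^ p * t⁻¹ = a ^ q) : Commute (a ^ p) (t ^ 2) := by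
  have h1 : t * (t * a ^ p * t⁻¹) * t⁻¹ = a ^ p := by
    rcases Int.natAbs_eq_natAbs_iff.1 heq with h | h
    · subst h
      rw [hr0, hr0]
    · have hq' : q = -p := by omega
      subst hq'
      rw [hr0, zpow_neg, ← conj_inv, hr0, zpow_neg, inv_inv]
  have h2 : t ^ 2 * a ^ p = a ^ p * t ^ 2 := by
    conv_rhs => rw [← h1]
    rw [pow_two]
    simp only [mul_assoc, inv_mul_cancel_left, inv_mul_cancel, mul_one]
  exact h2.symm

end BSHyp

/-- A hyperbolic group contains no Baumslag–Solitar group as a subgroup. -/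
theorem stmt_5 {G : Type*} [Group G] (hG : IsHyperbolicGroup G)
    (p q : ℤ) (hp : p ≠ 0) (hq : q ≠ 0) :
    ¬ ∃ φ : BaumslagSolitar p q →* G, Function.Injective φ := by
  rintro ⟨φ, hφ⟩
  have hrel := congrArg φ (BSHyp.bs_rel p q)
  simp only [map_mul, map_inv, map_zpow] at hrel
  have hfin : ¬ IsOfFinOrder (φ (BSHyp.bsA p q)) := by
    intro h
    rw [isOfFinOrder_iff_pow_eq_one] at h
    obtain ⟨n, hn, h⟩ := h
    rw [← map_pow, ← map_one φ] at h
    have := BSHyp.bsA_zpow p q hp hq n (by rw [zpow_natCast]; exact hφ h)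
    omega
  rcases lt_trichotomy p.natAbs q.natAbs with hlt | heq | hgt
  · exact BSHyp.no_distort hG _ _ p q hlt hp hrel hfin
  · set a := BSHyp.bsA p q with ha
    set t := BSHyp.bsT p q with ht
    have hr0 : t * a ^ p * t⁻¹ = a ^ q := BSHyp.bs_rel p q
    have hc : Commute (a ^ p) (t ^ 2) := BSHyp.comm_sq a t p q heq hr0
    refine BSHyp.no_Z2 hG (φ (a ^ p)) (φ (t ^ 2)) (hc.map φ) ?_
    rintro ⟨i, j⟩ ⟨i', j'⟩ hij
    simp only [← map_pow, ← map_mul] at hij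
    have hij := hφ hij
    obtain ⟨ψ, e1, e2⟩ := BSHyp.bs_lift p q (1 : Multiplicative ℤ) (Multiplicative.ofAdd 1)
      (by simp)
    change ψ a = 1 at e1
    change ψ t = _ at e2
    have h3 := congrArg ψ hij
    simp only [map_mul, map_pow, map_zpow, e1, e2, one_zpow, one_pow, one_mul] at h3
    have h4 := congrArg Multiplicative.toAdd h3
    simp at h4
    subst h4
    have h5 := mul_right_cancel hij
    rw [← zpow_natCast, ← zpow_natCast, ← zpow_mul, ← zpow_mul] at h5
    have h6 : a ^ (p * i - p * i') = 1 := by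
      rw [zpow_sub, h5, mul_inv_cancel]
    have h7 := BSHyp.bsA_zpow p q hp hq _ h6
    have h8 : (i : ℤ) = i' := mul_left_cancel₀ hp (sub_eq_zero.1 h7)
    have : i = i' := by exact_mod_cast h8
    rw [this]
  · refine BSHyp.no_distort hG (φ (BSHyp.bsA p q)) (φ (BSHyp.bsT p q))⁻¹ q p hgt hq ?_ hfin
    rw [← hrel]
    group
end

section
/- Let G be a hyperbolic group and let K be a subgroup of G which is not a torsion group (K contains an element of infinite order). If the centralizer Z_G(K) is virtually ℤ (equivalently, by the previous result, if Z_G(K) is infinite), then K itself is virtually ℤ: K contains an infinite cyclic subgroup of finite index. -/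
/-- A group is virtually `ℤ` if it is infinite and contains an infinite cyclic subgroup
of finite index. -/
def VirtuallyZ (H : Type*) [Group H] : Prop :=
  Infinite H ∧ ∃ K : Subgroup H, K.FiniteIndex ∧ IsCyclic K ∧ Infinite K


structure LenFn {G : Type*} [Group G] (l : G → ℕ) : Prop where
  mul : ∀ x y, l (x * y) ≤ l x + l y
  inv : ∀ x, l x⁻¹ = l x
  fin : ∀ n, {x | l x ≤ n}.Finite
  geo : ∀ x i, i ≤ l x → ∃ p, l p = i ∧ l (p⁻¹ * x) = l x - i

theorem exists_lenFn {G : Type*} [Group G] (S : Set G) (hS : S.Finite)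
    (hc : Subgroup.closure S = ⊤) :
    ∃ l : G → ℕ, LenFn l ∧ ∀ g h, wordDist S g h = l (g⁻¹ * h) := by
  classical
  have hex : ∀ x : G, ∃ n : ℕ, ∃ w : List G, (∀ a ∈ w, a ∈ S ∨ a⁻¹ ∈ S) ∧ w.prod = x ∧
      w.length = n := by
    intro x
    have hx : x ∈ Subgroup.closure S := by rw [hc]; trivial
    rw [← Subgroup.mem_toSubmonoid, Subgroup.closure_toSubmonoid] at hx
    obtain ⟨w, hw, hp⟩ := Submonoid.exists_list_of_mem_closure hx
    refine ⟨_, w, fun a ha => ?_, hp, rfl⟩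
    rcases hw a ha with h | h
    · exact Or.inl h
    · exact Or.inr (by simpa using h)
  let l : G → ℕ := fun x => Nat.find (hex x)
  have hl : ∀ x, ∃ w : List G, (∀ a ∈ w, a ∈ S ∨ a⁻¹ ∈ S) ∧ w.prod = x ∧ w.length = l x :=
    fun x => Nat.find_spec (hex x)
  have hmin : ∀ w : List G, (∀ a ∈ w, a ∈ S ∨ a⁻¹ ∈ S) → l w.prod ≤ w.length :=
    fun w hw => Nat.find_min' (hex w.prod) ⟨w, hw, rfl, rfl⟩
  have hmul : ∀ x y, l (x * y) ≤ l x + l y := by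
    intro x y
    obtain ⟨w, hw, rfl, hwl⟩ := hl x
    obtain ⟨v, hv, rfl, hvl⟩ := hl y
    rw [← hwl, ← hvl, ← List.prod_append, ← List.length_append]
    apply hmin
    intro a ha
    rcases List.mem_append.1 ha with h | h
    · exact hw a h
    · exact hv a h
  have hinv' : ∀ x, l x⁻¹ ≤ l x := by
    intro x
    obtain ⟨w, hw, rfl, hwl⟩ := hl x
    rw [← hwl, List.prod_inv_reverse]
    refine (hmin _ ?_).trans (by simp)
    intro a ha
    simp only [List.mem_reverse, List.mem_map] at ha
    obtain ⟨b, hb, rfl⟩ := ha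
    rcases hw b hb with h | h
    · right; simpa using h
    · left; exact h
  refine ⟨l, ⟨hmul, ?_, ?_, ?_⟩, ?_⟩
  · intro x
    refine le_antisymm (hinv' x) ?_
    simpa using hinv' x⁻¹
  · intro n
    have hT : (S ∪ S⁻¹).Finite := hS.union hS.inv
    have : Finite (S ∪ S⁻¹ : Set G) := hT
    have hf : {w : List (S ∪ S⁻¹ : Set G) | w.length ≤ n}.Finite := List.finite_length_le _ n
    refine (hf.image (fun w => (w.map Subtype.val).prod)).subset ?_
    intro x hx
    obtain ⟨w, hw, hp, hwl⟩ := hl x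
    have hw' : ∀ a ∈ w, a ∈ (S ∪ S⁻¹ : Set G) := fun a ha => by
      rcases hw a ha with h | h
      · exact Or.inl h
      · exact Or.inr (by simpa using h)
    lift w to List (S ∪ S⁻¹ : Set G) using hw'
    refine ⟨w, ?_, hp⟩
    simp only [List.length_map] at hwl
    show w.length ≤ n
    rw [hwl]; exact hx
  · intro x i hi
    obtain ⟨w, hw, hp, hwl⟩ := hl x
    have h1 : l (w.take i).prod ≤ i :=
      (hmin _ (fun a ha => hw a (List.mem_of_mem_take ha))).trans (by simp)
    have h2 : l (w.drop i).prod ≤ l x - i :=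
      (hmin _ (fun a ha => hw a (List.mem_of_mem_drop ha))).trans (by simp [hwl])
    have h3 : (w.take i).prod * (w.drop i).prod = x := by
      rw [← List.prod_append, List.take_append_drop, hp]
    have h4 : (w.take i).prod⁻¹ * x = (w.drop i).prod := by rw [← h3]; group
    have h5 := hmul (w.take i).prod (w.drop i).prod
    rw [h3] at h5
    refine ⟨(w.take i).prod, by omega, ?_⟩
    rw [h4]; omega
  · intro g h
    unfold wordDist
    apply le_antisymm
    · apply csInf_le
      · refine ⟨0, ?_⟩
        rintro r ⟨w, -, -, rfl⟩
        positivity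
      · obtain ⟨w, hw, hp, hwl⟩ := hl (g⁻¹ * h)
        exact ⟨w, hw, hp, by rw [hwl]⟩
    · apply le_csInf
      · obtain ⟨w, hw, hp, hwl⟩ := hl (g⁻¹ * h)
        exact ⟨_, w, hw, hp, rfl⟩
      · rintro r ⟨w, hw, hp, rfl⟩
        rw [← hp]
        exact_mod_cast hmin w hw

/-- four point inequality -/
def FourPt {G : Type*} [Group G] (l : G → ℕ) (δ : ℝ) : Prop :=
  ∀ x y z w : G, (l (x⁻¹ * y) : ℝ) + l (z⁻¹ * w) ≤
    max ((l (x⁻¹ * z) : ℝ) + l (y⁻¹ * w)) ((l (y⁻¹ * z) : ℝ) + l (x⁻¹ * w)) + 2 * δ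

theorem quad {G : Type*} [Group G] {l : G → ℕ} (hl : LenFn l) {δ : ℝ} (hδ : 0 ≤ δ)
    (h4 : FourPt l δ) (h m c p : G) (M i : ℕ) (hcomm : c * h = h * c)
    (hm : l m = i) (hmh : l (m⁻¹ * h) + i = l h)
    (hi : (M : ℝ) + 2 * δ < i) (hi' : (M : ℝ) + 2 * δ + i < l h) (hc : l c ≤ M)
    (hp : l p = l (c * m)) (hph : l (p⁻¹ * h) + l (c * m) = l h) :
    (l (p⁻¹ * (c * m)) : ℝ) ≤ 6 * δ := by
  have sym : ∀ x y : G, l (x⁻¹ * y) = l (y⁻¹ * x) := fun x y => by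
    rw [← hl.inv]; congr 1; group
  -- four points c, h c, 1 , cm
  have e1 : l (c⁻¹ * (h * c)) = l h := by rw [← hcomm]; congr 1; group
  have e2 : l ((h * c)⁻¹ * (c * m)) = l (m⁻¹ * h) := by
    rw [← hcomm, sym]; congr 1; group
  have e3 : l (c⁻¹ * (c * m)) = i := by rw [← hm]; congr 1; group
  have e4 : l (h⁻¹ * (h * c)) = l c := by congr 1; group
  have A := h4 c (h * c) 1 (c * m)
  have B := h4 1 (h * c) h (c * m)
  have C := h4 1 h p (c * m)
  have t1 : l m ≤ l c + l (c * m) := by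
    have := hl.mul c⁻¹ (c * m)
    rw [hl.inv] at this; simpa using this
  have t2 : l (m⁻¹ * h) ≤ l (h⁻¹ * (c * m)) + l c := by
    have := hl.mul ((c*m)⁻¹ * h) (h⁻¹ * (h * c))
    rw [sym (c*m) h, e4] at this
    have e : ((c*m)⁻¹ * h) * (h⁻¹ * (h * c)) = m⁻¹ * h := by
      rw [mul_assoc, mul_inv_cancel_left, ← hcomm]; group
    rwa [e] at this
  rw [e1, e2, e3] at A
  rw [sym (h * c) h, e4, e2] at B
  simp only [inv_one, one_mul, mul_one, hl.inv] at A B C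
  rw [sym h p] at C
  rw [hp] at C
  have hmh' : (l (m⁻¹ * h) : ℝ) + i = l h := by exact_mod_cast hmh
  have hph' : (l (p⁻¹ * h) : ℝ) + l (c * m) = l h := by exact_mod_cast hph
  have hc' : (l c : ℝ) ≤ M := by exact_mod_cast hc
  have t1' : (l m : ℝ) ≤ l c + l (c * m) := by exact_mod_cast t1
  have t2' : (l (m⁻¹ * h) : ℝ) ≤ l (h⁻¹ * (c * m)) + l c := by exact_mod_cast t2
  have hm' : (l m : ℝ) = i := by exact_mod_cast hm
  rcases max_cases ((l c : ℝ) + l (m⁻¹ * h)) ((l (h * c) : ℝ) + i) with ⟨a, -⟩ | ⟨a, -⟩ <;>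
  rcases max_cases ((l h : ℝ) + l (m⁻¹ * h)) ((l c : ℝ) + l (c * m)) with ⟨b, -⟩ | ⟨b, -⟩ <;>
  rcases max_cases ((l (c * m) : ℝ) + l (h⁻¹ * (c * m))) ((l (p⁻¹ * h) : ℝ) + l (c * m))
    with ⟨d, -⟩ | ⟨d, -⟩ <;> rw [a] at A <;> rw [b] at B <;> rw [d] at C <;> linarith

theorem count {G : Type*} [Group G] {l : G → ℕ} (hl : LenFn l) {δ : ℝ} (hδ : 0 ≤ δ)
    (h4 : FourPt l δ) : ∃ B : ℕ, ∀ (g : G), (∀ n : ℤ, n ≠ 0 → g ^ n ≠ 1) →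
    ∀ (M : ℕ) (F : Finset G), (∀ c ∈ F, c * g = g * c ∧ l c ≤ M) →
      F.card ≤ (2 * M + 1) * B := by
  classical
  obtain ⟨D, hD⟩ := exists_nat_ge (6 * δ)
  refine ⟨(hl.fin D).toFinset.card, fun g hg M F hF => ?_⟩
  obtain ⟨E, hE⟩ := exists_nat_gt (2 * δ)
  have hinj : Function.Injective (fun n : ℕ => g ^ n) := by
    intro a b hab
    by_contra hne
    refine hg ((a : ℤ) - b) (by omega) ?_
    rw [zpow_sub, zpow_natCast, zpow_natCast]
    simp only at hab
    rw [hab, mul_inv_cancel]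
  have : ∃ n : ℕ, 2 * (M + E) < l (g ^ n) := by
    by_contra hcon
    push Not at hcon
    exact Set.infinite_range_of_injective hinj
      ((hl.fin (2 * (M + E))).subset (by rintro _ ⟨n, rfl⟩; exact hcon n))
  obtain ⟨n, hn⟩ := this
  set h := g ^ n with hh
  obtain ⟨m, hm, hmh⟩ := hl.geo h (M + E) (by omega)
  have hcm : ∀ c ∈ F, l (c * m) ≤ l h ∧ E ≤ l (c * m) ∧ l (c * m) ≤ E + 2 * M := by
    intro c hc
    have h1 := hl.mul c m
    have h2 := (hF c hc).2
    have h3 := hl.mul c⁻¹ (c * m)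
    rw [hl.inv, inv_mul_cancel_left] at h3
    omega
  have hgeo : ∀ i, ∃ p, i ≤ l h → l p = i ∧ l (p⁻¹ * h) = l h - i := by
    intro i
    by_cases hi : i ≤ l h
    · obtain ⟨p, hp⟩ := hl.geo h i hi
      exact ⟨p, fun _ => hp⟩
    · exact ⟨1, fun h' => absurd h' hi⟩
  choose p hp using hgeo
  have key : F.card ≤ (Finset.Icc E (E + 2 * M) ×ˢ (hl.fin D).toFinset).card := by
    apply Finset.card_le_card_of_injOn (fun c => (l (c * m), (p (l (c * m)))⁻¹ * (c * m)))
    · intro c hc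
      obtain ⟨a1, a2, a3⟩ := hcm c hc
      obtain ⟨p1, p2⟩ := hp _ a1
      simp only [Finset.coe_product, Set.mem_prod, Finset.mem_coe, Finset.mem_Icc,
        Set.Finite.mem_toFinset, Set.mem_ofPred_eq]
      refine ⟨⟨a2, a3⟩, ?_⟩
      have hcg : Commute c g := (hF c hc).1
      have := quad hl hδ h4 h m c (p (l (c * m))) M (M + E) (hcg.pow_right n) hm (by omega)
        (by push_cast; linarith)
        (by
          have : ((2 * (M + E) : ℕ) : ℝ) < l h := by exact_mod_cast hn
          push_cast at this ⊢; linarith) (hF c hc).2 p1 (by omega)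
      exact_mod_cast this.trans hD
    · intro c hc d hd hcd
      simp only [Prod.mk.injEq] at hcd
      obtain ⟨u, v⟩ := hcd
      rw [u] at v
      simpa using v
  refine key.trans (le_of_eq ?_)
  rw [Finset.card_product, Nat.card_Icc]
  congr 1
  omega

theorem cent_finite {G : Type*} [Group G] {l : G → ℕ} (hl : LenFn l) {δ : ℝ} (hδ : 0 ≤ δ)
    (h4 : FourPt l δ) (g : G) (hg : ∀ n : ℤ, n ≠ 0 → g ^ n ≠ 1) :
    (Subgroup.zpowers g).relIndex (Subgroup.centralizer {g}) ≠ 0 := by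
  classical
  obtain ⟨B, hB⟩ := count hl hδ h4
  set C := Subgroup.centralizer ({g} : Set G)
  set Z := (Subgroup.zpowers g).subgroupOf C
  show Z.index ≠ 0
  have hfin : Finite (C ⧸ Z) := by
    by_contra hinf
    rw [not_finite_iff_infinite] at hinf
    obtain ⟨T, hT⟩ := Infinite.exists_subset_card_eq (C ⧸ Z) (2 * l g * B + 1)
    let L := T.sup (fun t => l (t.out : G))
    let k := (2 * L + 1) * B
    let f : (C ⧸ Z) × ℕ → G := fun q => (q.1.out : G) * g ^ q.2
    have hlp : ∀ n : ℕ, l (g ^ (n + 1)) ≤ (n + 1) * l g := by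
      intro n
      induction n with
      | zero => simp
      | succ n ih =>
        have := hl.mul (g ^ (n + 1)) g
        rw [← pow_succ] at this
        linarith
    have hf : Function.Injective f := by
      rintro ⟨s, a⟩ ⟨t, b⟩ hst
      simp only [f] at hst
      have hst' : s = t := by
        rw [← s.out_eq, ← t.out_eq]
        apply QuotientGroup.eq.2
        rw [Subgroup.mem_subgroupOf, Subgroup.mem_zpowers_iff]
        refine ⟨(a : ℤ) - b, ?_⟩
        push_cast
        rw [zpow_sub, zpow_natCast, zpow_natCast, eq_inv_mul_iff_mul_eq, ← mul_assoc, hst]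
        group
      subst hst'
      have hab : g ^ a = g ^ b := mul_left_cancel hst
      have : a = b := by
        by_contra hne
        refine hg ((a : ℤ) - b) (by omega) ?_
        rw [zpow_sub, zpow_natCast, zpow_natCast, hab, mul_inv_cancel]
      rw [this]
    have := hB g hg (L + (k + 1) * l g) ((T ×ˢ Finset.Icc 1 (k + 1)).image f) (by
      intro c hc
      obtain ⟨⟨t, a⟩, hta, rfl⟩ := Finset.mem_image.1 hc
      rw [Finset.mem_product, Finset.mem_Icc] at hta
      obtain ⟨ht, ha1, ha2⟩ := hta
      simp only at ht ha1 ha2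
      constructor
      · have h1 : Commute (t.out : G) g := by
          have := Subgroup.mem_centralizer_iff.1 t.out.2 g rfl
          exact this.symm
        exact (h1.mul_left ((Commute.refl g).pow_left a)).eq
      · obtain ⟨b, rfl⟩ : ∃ b, a = b + 1 := ⟨a - 1, by omega⟩
        have h1 := hl.mul (t.out : G) (g ^ (b + 1))
        have h2 : l (t.out : G) ≤ L := Finset.le_sup (f := fun t : C ⧸ Z => l (t.out : G)) ht
        have h3 := hlp b
        have h5 : (b + 1) * l g ≤ (k + 1) * l g := Nat.mul_le_mul_right _ ha2
        simp only [f]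
        omega)
    rw [Finset.card_image_of_injective _ hf, Finset.card_product, Nat.card_Icc, hT] at this
    have hk : k = (2 * L + 1) * B := rfl
    simp only [Nat.add_sub_cancel] at this
    nlinarith
  exact Subgroup.index_ne_zero_of_finite

/-- In a hyperbolic group, if `K` is a non-torsion subgroup whose centralizer is
virtually `ℤ`, then `K` itself is virtually `ℤ`. -/
theorem stmt_8 {G : Type*} [Group G] (hG : IsHyperbolicGroup G)
    (K : Subgroup G) (hK : ∃ k ∈ K, ∀ n : ℤ, n ≠ 0 → k ^ n ≠ 1)
    (hZ : VirtuallyZ (Subgroup.centralizer (K : Set G))) :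
    VirtuallyZ K := by
  obtain ⟨S, hS, hc, δ, hδ, hyp⟩ := hG
  obtain ⟨l, hl, hd⟩ := exists_lenFn S hS hc
  have h4 : FourPt l δ := by
    intro x y z w
    have h := hyp w x y z
    have sym : ∀ x y : G, l (x⁻¹ * y) = l (y⁻¹ * x) := fun x y => by
      rw [← hl.inv]; congr 1; group
    unfold gromovProd at h
    simp only [hd] at h
    rcases max_cases ((l (x⁻¹ * z) : ℝ) + l (y⁻¹ * w)) ((l (y⁻¹ * z) : ℝ) + l (x⁻¹ * w)) with
      ⟨a, a'⟩ | ⟨a, a'⟩ <;> rw [a] <;>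
    rcases min_le_iff.1 (sub_le_iff_le_add.1 h) with h | h <;> linarith
  obtain ⟨-, Z0, -, hcyc, hinf⟩ := hZ
  obtain ⟨z, hz⟩ := hcyc.exists_generator
  have hz0 : ∀ n : ℤ, n ≠ 0 → ((z : Subgroup.centralizer (K : Set G)) : G) ^ n ≠ 1 := by
    intro n hn h1
    have h2 : z ^ n = 1 := by
      apply Subtype.ext; apply Subtype.ext; simpa using h1
    have h3 : IsOfFinOrder z := isOfFinOrder_iff_zpow_eq_one.2 ⟨n, hn, h2⟩
    have h5 : (Subgroup.zpowers z : Set Z0) = Set.univ := Set.eq_univ_of_forall hz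
    have h6 : (Subgroup.zpowers z : Set Z0).Finite := finite_zpowers.2 h3
    rw [h5] at h6
    exact Set.infinite_univ h6
  set g : G := ((z : Subgroup.centralizer (K : Set G)) : G) with hgdef
  have hgK : g ∈ Subgroup.centralizer (K : Set G) := (z : Subgroup.centralizer (K : Set G)).2
  have hKC : K ≤ Subgroup.centralizer {g} := by
    intro k hk
    rw [Subgroup.mem_centralizer_iff]
    rintro _ rfl
    exact (Subgroup.mem_centralizer_iff.1 hgK k hk).symm
  have hidx := cent_finite hl hδ h4 g hz0
  have hidx' : (Subgroup.zpowers g).relIndex K ≠ 0 := fun h0 =>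
    hidx (Subgroup.relIndex_eq_zero_of_le_right hKC h0)
  obtain ⟨k, hk, hkn⟩ := hK
  have hKinf : Infinite K := by
    refine Infinite.of_injective (fun n : ℤ => (⟨k ^ n, K.zpow_mem hk n⟩ : K)) ?_
    intro a b hab
    simp only [Subtype.mk.injEq] at hab
    by_contra hne
    exact hkn (a - b) (sub_ne_zero.2 hne) (by rw [zpow_sub, hab, mul_inv_cancel])
  refine ⟨hKinf, (Subgroup.zpowers g).subgroupOf K, ⟨hidx'⟩, ?_, ?_⟩
  · let φ : (Subgroup.zpowers g).subgroupOf K →* Subgroup.zpowers g :=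
      { toFun := fun x => ⟨x.1.1, x.2⟩, map_one' := rfl, map_mul' := fun _ _ => rfl }
    refine isCyclic_of_injective φ ?_
    intro x y hxy
    apply Subtype.ext; apply Subtype.ext
    exact congrArg (fun u : Subgroup.zpowers g => (u : G)) hxy
  · by_contra hfin
    rw [not_infinite_iff_finite] at hfin
    have : ((Subgroup.zpowers g).subgroupOf K).FiniteIndex := ⟨hidx'⟩
    have : Finite (K ⧸ (Subgroup.zpowers g).subgroupOf K) := Subgroup.finite_quotient_of_finiteIndex
    have : Finite K := Finite.of_equiv _ (Subgroup.groupEquivQuotientProdSubgroup (s := (Subgroup.zpowers g).subgroupOf K)).symm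
    exact not_finite K
end
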